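/- arXiv:2604.01061 — 2 statements merged into one kernel-verified Lean document; each statement's English description precedes it below -/
import Mathlib

section
/- Let S be a subset of the chambers of a hyperplane arrangement 𝓗 in general position in ℝ^d. Then there exists an injective map μ : S → ⊔_{A∈supp(S)} conn(T_S(A)) such that for every A ∈ supp(S) at least one connected component of T_S(A) lies in the image of μ. Consequently, |supp(S)| ≤ |S| ≤ Σ_{A∈supp(S)} |conn(T_S(A))|. -/
open Set Topology

noncomputable section

/-- A hyperplane arrangement of `n` affine hyperplanes in `ℝ^d`, given by
nonzero normal vectors and offsets: the `i`-th hyperplane is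
`{x | ∑ j, normal i j * x j = offset i}`. -/
structure Arrangement (d n : ℕ) where
  normal : Fin n → (Fin d → ℝ)
  offset : Fin n → ℝ
  normal_ne : ∀ i, normal i ≠ 0

/-- The thickening (regular open hull) `T_S` of a set `S` of chambers. -/
def thickening {d : ℕ} (S : Set (Set (Fin d → ℝ))) : Set (Fin d → ℝ) :=
  interior (closure (⋃ C ∈ S, C))

/-- The set of connected components of a subset `X` of a topological space. -/
def connComps {α : Type*} [TopologicalSpace α] (X : Set α) : Set (Set α) :=
  {c | ∃ x ∈ X, c = connectedComponentIn X x}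

namespace Arrangement

variable {d n : ℕ} (𝓗 : Arrangement d n)

/-- The `i`-th hyperplane of the arrangement. -/
def H (i : Fin n) : Set (Fin d → ℝ) := {x | ∑ j, 𝓗.normal i j * x j = 𝓗.offset i}

/-- The positive open half-space determined by the `i`-th hyperplane. -/
def pos (i : Fin n) : Set (Fin d → ℝ) := {x | 𝓗.offset i < ∑ j, 𝓗.normal i j * x j}

/-- The negative open half-space determined by the `i`-th hyperplane. -/
def neg (i : Fin n) : Set (Fin d → ℝ) := {x | ∑ j, 𝓗.normal i j * x j < 𝓗.offset i}

/-- The complement of the union of the hyperplanes. -/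
def free : Set (Fin d → ℝ) := {x | ∀ i, x ∉ 𝓗.H i}

/-- The chambers: connected components of the complement of the hyperplanes. -/
def chambers : Set (Set (Fin d → ℝ)) :=
  {C | ∃ x ∈ 𝓗.free, C = connectedComponentIn 𝓗.free x}

/-- General position: the normals of any `≤ d` hyperplanes are linearly independent
(so that their intersection is an affine subspace of the right dimension), and no
`d+1` hyperplanes have a common point. -/
def GeneralPosition : Prop :=
  (∀ A : Finset (Fin n), A.card ≤ d →
      LinearIndependent ℝ (fun i : A => 𝓗.normal i.1)) ∧
  (∀ A : Finset (Fin n), A.card = d + 1 → (⋂ i ∈ A, 𝓗.H i) = ∅)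

/-- Hyperplane `e` separates `C` from `C'`. -/
def Separates (e : Fin n) (C C' : Set (Fin d → ℝ)) : Prop :=
  (C ⊆ 𝓗.pos e ∧ C' ⊆ 𝓗.neg e) ∨ (C ⊆ 𝓗.neg e ∧ C' ⊆ 𝓗.pos e)

/-- Adjacency in the chamber graph: two chambers are adjacent iff they are separated
by exactly one hyperplane (equivalently, share a common facet). -/
def Adj (C C' : Set (Fin d → ℝ)) : Prop :=
  C ∈ 𝓗.chambers ∧ C' ∈ 𝓗.chambers ∧ ∃! e : Fin n, 𝓗.Separates e C C'

/-- The edge boundary of a set `S` of chambers, encoded as the set of ordered pairs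
`(C, C')` of adjacent chambers with `C ∈ S` and `C' ∉ S` (each boundary edge is thus
counted exactly once). -/
def edgeBoundary (S : Set (Set (Fin d → ℝ))) :
    Set ((Set (Fin d → ℝ)) × (Set (Fin d → ℝ))) :=
  {q | q.1 ∈ S ∧ q.2 ∉ S ∧ 𝓗.Adj q.1 q.2}

/-- The stratum `T_S(A) = T_S ∩ L_A`. -/
def stratum (S : Set (Set (Fin d → ℝ))) (A : Finset (Fin n)) : Set (Fin d → ℝ) :=
  thickening S ∩ ⋂ i ∈ A, 𝓗.H i

/-- The support of `S`: those `A` with nonempty stratum. -/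
def supp (S : Set (Set (Fin d → ℝ))) : Set (Finset (Fin n)) :=
  {A | (𝓗.stratum S A).Nonempty}

/-- `H_f` bounds the stratum `T_S(A)`: the stratum lies entirely in one of the open
half-spaces of `H_f`, and `H_f` meets the closure of the stratum within `L_A`. -/
def Bounds (f : Fin n) (S : Set (Set (Fin d → ℝ))) (A : Finset (Fin n)) : Prop :=
  (𝓗.stratum S A ⊆ 𝓗.pos f ∨ 𝓗.stratum S A ⊆ 𝓗.neg f) ∧
  (𝓗.H f ∩ closure (𝓗.stratum S A) ∩ ⋂ i ∈ A, 𝓗.H i).Nonempty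

/-- `S` is strata-connected if every nonempty stratum is connected. -/
def StrataConnected (S : Set (Set (Fin d → ℝ))) : Prop :=
  ∀ A ∈ 𝓗.supp S, IsConnected (𝓗.stratum S A)

end Arrangement

/-- The generalized binomial coefficient `C(x, i) = x(x-1)⋯(x-i+1)/i!`. -/
noncomputable def gchoose (x : ℝ) (i : ℕ) : ℝ :=
  (∏ j ∈ Finset.range i, (x - j)) / (Nat.factorial i)

lemma comb {P Q E Z : Type*} [Fintype P] [Fintype Q] [Fintype E] [Fintype Z]
    (a : E → P) (b : E → Q) (p : P → Z) (q : Q → Z)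
    (h : ∀ (f : P → ℝ) (g : Q → ℝ), (∀ e, f (a e) = g (b e)) →
      ∃ φ : Z → ℝ, (∀ u, f u = φ (p u)) ∧ ∀ u, g u = φ (q u)) :
    Fintype.card P + Fintype.card Q ≤ Fintype.card Z + Fintype.card E := by
  classical
  let D : ((P → ℝ) × (Q → ℝ)) →ₗ[ℝ] (E → ℝ) :=
    (LinearMap.funLeft ℝ ℝ a).comp (LinearMap.fst ℝ _ _)
      - (LinearMap.funLeft ℝ ℝ b).comp (LinearMap.snd ℝ _ _)
  let R : (Z → ℝ) →ₗ[ℝ] ((P → ℝ) × (Q → ℝ)) :=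
    (LinearMap.funLeft ℝ ℝ p).prod (LinearMap.funLeft ℝ ℝ q)
  have h1 := LinearMap.finrank_range_add_finrank_ker D
  have h2 : Module.finrank ℝ (LinearMap.range D) ≤ Fintype.card E := by
    simpa using Submodule.finrank_le (LinearMap.range D)
  have h3 : LinearMap.ker D ≤ LinearMap.range R := by
    rintro ⟨f, g⟩ hfg
    obtain ⟨φ, h1, h2⟩ := h f g (fun e => by
      have := congrFun (LinearMap.mem_ker.1 hfg) e
      simp [D, LinearMap.funLeft_apply] at this
      linarith)
    refine ⟨φ, ?_⟩
    ext u
    · simp [R, h1 u, LinearMap.funLeft_apply]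
    · simp [R, h2 u, LinearMap.funLeft_apply]
  have h4 := Submodule.finrank_mono h3
  have h5 : Module.finrank ℝ (LinearMap.range R) ≤ Fintype.card Z := by
    simpa using LinearMap.finrank_range_le R
  have h6 : Module.finrank ℝ ((P → ℝ) × (Q → ℝ)) = Fintype.card P + Fintype.card Q := by
    simp
  omega

lemma cc_eq {E : Type*} [TopologicalSpace E] {X K : Set E} (hK : IsPreconnected K) (hKX : K ⊆ X)
    {x y : E} (hx : x ∈ K) (hy : y ∈ K) : connectedComponentIn X x = connectedComponentIn X y :=
  connectedComponentIn_eq (hK.subset_connectedComponentIn hx hKX hy)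

lemma glue {E : Type*} [NormedAddCommGroup E] [NormedSpace ℝ E] (L X : Set E) (hL : Convex ℝ L)
    (hXL : X ⊆ L) (hX : ∀ x ∈ X, ∃ r > 0, Metric.ball x r ∩ L ⊆ X) (g : E → ℝ)
    (hg : Continuous g)
    (hgp : Convex ℝ {x | 0 < g x}) (hgn : Convex ℝ {x | g x < 0}) (hgz : Convex ℝ {x | g x = 0})
    (hp : ∀ x ∈ X, g x = 0 → ∀ r > 0, ∃ y ∈ Metric.ball x r ∩ L, 0 < g y)
    (hn : ∀ x ∈ X, g x = 0 → ∀ r > 0, ∃ y ∈ Metric.ball x r ∩ L, g y < 0)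
    (f1 : (connComps X).Finite) (f2 : (connComps (X ∩ {x | g x = 0})).Finite)
    (f3 : (connComps (X ∩ {x | 0 < g x})).Finite) (f4 : (connComps (X ∩ {x | g x < 0})).Finite) :
    (connComps (X ∩ {x | 0 < g x})).ncard + (connComps (X ∩ {x | g x < 0})).ncard
      ≤ (connComps X).ncard + (connComps (X ∩ {x | g x = 0})).ncard := by
  classical
  set Xp := X ∩ {x | 0 < g x} with hXp
  set Xn := X ∩ {x | g x < 0} with hXn
  set Xz := X ∩ {x | g x = 0} with hXz
  have := f1.fintype
  have := f2.fintype
  have := f3.fintype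
  have := f4.fintype
  simp only [← Nat.card_coe_set_eq, Nat.card_eq_fintype_card]
  choose! r hr hrX using hX
  have hp' : ∀ x ∈ Xz, ∃ y ∈ Metric.ball x (r x) ∩ L, 0 < g y := fun x hx =>
    hp x hx.1 hx.2 _ (hr x hx.1)
  have hn' : ∀ x ∈ Xz, ∃ y ∈ Metric.ball x (r x) ∩ L, g y < 0 := fun x hx =>
    hn x hx.1 hx.2 _ (hr x hx.1)
  choose! y hyB hy using hp'
  choose! z hzB hz using hn'
  -- half balls
  have hBp : ∀ x, IsPreconnected (Metric.ball x (r x) ∩ L ∩ {x | 0 < g x}) := fun x =>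
    (((convex_ball x _).inter hL).inter hgp).isPreconnected
  have hBn : ∀ x, IsPreconnected (Metric.ball x (r x) ∩ L ∩ {x | g x < 0}) := fun x =>
    (((convex_ball x _).inter hL).inter hgn).isPreconnected
  have hBz : ∀ x, IsPreconnected (Metric.ball x (r x) ∩ L ∩ {x | g x = 0}) := fun x =>
    (((convex_ball x _).inter hL).inter hgz).isPreconnected
  have sBp : ∀ x ∈ X, Metric.ball x (r x) ∩ L ∩ {x | 0 < g x} ⊆ Xp := fun x hx =>
    inter_subset_inter_left _ (hrX x hx)
  have sBn : ∀ x ∈ X, Metric.ball x (r x) ∩ L ∩ {x | g x < 0} ⊆ Xn := fun x hx =>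
    inter_subset_inter_left _ (hrX x hx)
  have hyX : ∀ x ∈ Xz, y x ∈ Xp := fun x hx => sBp x hx.1 ⟨hyB x hx, hy x hx⟩
  have hzX : ∀ x ∈ Xz, z x ∈ Xn := fun x hx => sBn x hx.1 ⟨hzB x hx, hz x hx⟩
  have key : ∀ x ∈ Xz, ∀ x' ∈ Metric.ball x (r x) ∩ Xz,
      connectedComponentIn Xp (y x) = connectedComponentIn Xp (y x') ∧
      connectedComponentIn Xn (z x) = connectedComponentIn Xn (z x') := by
    intro x hx x' hx'
    obtain ⟨ρ, hρ, hρs⟩ := Metric.isOpen_iff.1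
      ((Metric.isOpen_ball (x := x) (ε := r x)).inter (Metric.isOpen_ball (x := x') (ε := r x')))
      x' ⟨hx'.1, Metric.mem_ball_self (hr x' hx'.2.1)⟩
    obtain ⟨u, hu, hu0⟩ := hp x' hx'.2.1 hx'.2.2 ρ hρ
    obtain ⟨w, hw, hw0⟩ := hn x' hx'.2.1 hx'.2.2 ρ hρ
    constructor
    · exact (cc_eq (hBp x) (sBp x hx.1) ⟨hyB x hx, hy x hx⟩ ⟨⟨(hρs hu.1).1, hu.2⟩, hu0⟩).trans
        (cc_eq (hBp x') (sBp x' hx'.2.1) ⟨⟨(hρs hu.1).2, hu.2⟩, hu0⟩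
          ⟨hyB x' hx'.2, hy x' hx'.2⟩)
    · exact (cc_eq (hBn x) (sBn x hx.1) ⟨hzB x hx, hz x hx⟩ ⟨⟨(hρs hw.1).1, hw.2⟩, hw0⟩).trans
        (cc_eq (hBn x') (sBn x' hx'.2.1) ⟨⟨(hρs hw.1).2, hw.2⟩, hw0⟩
          ⟨hzB x' hx'.2, hz x' hx'.2⟩)
  have keyK : ∀ x ∈ Xz, ∀ x' ∈ connectedComponentIn Xz x,
      connectedComponentIn Xp (y x) = connectedComponentIn Xp (y x') ∧
      connectedComponentIn Xn (z x) = connectedComponentIn Xn (z x') := by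
    intro x hx x' hx'
    refine (isPreconnected_connectedComponentIn (F := Xz) (x := x)).induction₂'
      (fun x x' => connectedComponentIn Xp (y x) = connectedComponentIn Xp (y x') ∧
      connectedComponentIn Xn (z x) = connectedComponentIn Xn (z x')) ?_ ?_
      (mem_connectedComponentIn hx) hx'
    · intro u hu
      have huX := connectedComponentIn_subset _ _ hu
      filter_upwards [inter_mem_nhdsWithin _ (Metric.ball_mem_nhds u (hr u huX.1))] with v hv
      have := key u huX v ⟨hv.2, connectedComponentIn_subset _ _ hv.1⟩
      exact ⟨this, this.1.symm, this.2.symm⟩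
    · intro a b c _ _ _ h1 h2
      exact ⟨h1.1.trans h2.1, h1.2.trans h2.2⟩
  choose! rep hrep hrepe using (fun K (hK : K ∈ connComps Xz) => hK)
  choose! repX hrepX hrepXe using (fun K (hK : K ∈ connComps X) => hK)
  choose! repp hrepp hreppe using (fun K (hK : K ∈ connComps Xp) => hK)
  choose! repn hrepn hrepne using (fun K (hK : K ∈ connComps Xn) => hK)
  refine comb (P := connComps Xp) (Q := connComps Xn) (E := connComps Xz) (Z := connComps X)
    (fun K => ⟨connectedComponentIn Xp (y (rep K)), _, hyX _ (hrep _ K.2), rfl⟩)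
    (fun K => ⟨connectedComponentIn Xn (z (rep K)), _, hzX _ (hrep _ K.2), rfl⟩)
    (fun K => ⟨connectedComponentIn X (repp K), _, (hrepp _ K.2).1, rfl⟩)
    (fun K => ⟨connectedComponentIn X (repn K), _, (hrepn _ K.2).1, rfl⟩) ?_
  intro f h hfh
  let f' : Set E → ℝ := fun K => if hK : K ∈ connComps Xp then f ⟨K, hK⟩ else 0
  let h' : Set E → ℝ := fun K => if hK : K ∈ connComps Xn then h ⟨K, hK⟩ else 0
  have hfh' : ∀ x ∈ Xz, f' (connectedComponentIn Xp (y x)) = h' (connectedComponentIn Xn (z x)) := by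
    intro x hx
    have hK : connectedComponentIn Xz x ∈ connComps Xz := ⟨x, hx, rfl⟩
    have e1 := hfh ⟨_, hK⟩
    have hxx : x ∈ connectedComponentIn Xz (rep (connectedComponentIn Xz x)) := by
      rw [← hrepe _ hK]; exact mem_connectedComponentIn hx
    obtain ⟨k1, k2⟩ := keyK _ (hrep _ hK) x hxx
    rw [← k1, ← k2]
    have m1 : connectedComponentIn Xp (y (rep (connectedComponentIn Xz x))) ∈ connComps Xp :=
      ⟨_, hyX _ (hrep _ hK), rfl⟩
    have m2 : connectedComponentIn Xn (z (rep (connectedComponentIn Xz x))) ∈ connComps Xn :=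
      ⟨_, hzX _ (hrep _ hK), rfl⟩
    simp only [f', h', dif_pos m1, dif_pos m2]
    exact e1
  let F : E → ℝ := fun x => if 0 < g x then f' (connectedComponentIn Xp x) else
    if g x < 0 then h' (connectedComponentIn Xn x) else f' (connectedComponentIn Xp (y x))
  have hF : ∀ x ∈ X, ∀ᶠ u in 𝓝[X] x, F u = F x := by
    intro x hx
    rcases lt_trichotomy (g x) 0 with h0 | h0 | h0
    · filter_upwards [inter_mem_nhdsWithin _ (Metric.ball_mem_nhds x (hr x hx)),
        mem_nhdsWithin_of_mem_nhds ((isOpen_lt hg continuous_const).mem_nhds h0)] with u hu hu0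
      have hu0 : g u < 0 := hu0
      simp only [F, if_neg h0.not_gt, if_neg hu0.not_gt, if_pos h0, if_pos hu0]
      congr 1
      exact cc_eq (hBn x) (sBn x hx) ⟨⟨hu.2, hXL hu.1⟩, hu0⟩
        ⟨⟨Metric.mem_ball_self (hr x hx), hXL hx⟩, h0⟩
    · filter_upwards [inter_mem_nhdsWithin _ (Metric.ball_mem_nhds x (hr x hx))] with u hu
      have hxz : x ∈ Xz := ⟨hx, h0⟩
      have hFx : F x = f' (connectedComponentIn Xp (y x)) := by simp [F, h0]
      rcases lt_trichotomy (g u) 0 with hu0 | hu0 | hu0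
      · rw [hFx, hfh' x hxz]
        simp only [F, if_neg hu0.not_gt, if_pos hu0]
        congr 1
        exact cc_eq (hBn x) (sBn x hx) ⟨⟨hu.2, hXL hu.1⟩, hu0⟩ ⟨hzB x hxz, hz x hxz⟩
      · rw [hFx, (key x hxz u ⟨hu.2, hu.1, hu0⟩).1]
        simp [F, hu0]
      · rw [hFx]
        simp only [F, if_pos hu0]
        congr 1
        exact cc_eq (hBp x) (sBp x hx) ⟨⟨hu.2, hXL hu.1⟩, hu0⟩ ⟨hyB x hxz, hy x hxz⟩
    · filter_upwards [inter_mem_nhdsWithin _ (Metric.ball_mem_nhds x (hr x hx)),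
        mem_nhdsWithin_of_mem_nhds ((isOpen_lt continuous_const hg).mem_nhds h0)] with u hu hu0
      have hu0 : 0 < g u := hu0
      simp only [F, if_pos h0, if_pos hu0]
      congr 1
      exact cc_eq (hBp x) (sBp x hx) ⟨⟨hu.2, hXL hu.1⟩, hu0⟩
        ⟨⟨Metric.mem_ball_self (hr x hx), hXL hx⟩, h0⟩
  have hFK : ∀ x ∈ X, ∀ x' ∈ connectedComponentIn X x, F x = F x' := by
    intro x hx x' hx'
    refine (isPreconnected_connectedComponentIn (F := X) (x := x)).induction₂'
      (fun x x' => F x = F x') ?_ ?_ (mem_connectedComponentIn hx) hx'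
    · intro u hu
      filter_upwards [nhdsWithin_mono u (connectedComponentIn_subset X x)
        (hF u (connectedComponentIn_subset _ _ hu))] with v hv
      exact ⟨hv.symm, hv⟩
    · intro a b c _ _ _ h1 h2
      exact h1.trans h2
  have hFK' : ∀ x ∈ X, F (repX (connectedComponentIn X x)) = F x := by
    intro x hx
    have hK : connectedComponentIn X x ∈ connComps X := ⟨x, hx, rfl⟩
    refine hFK _ (hrepX _ hK) x ?_
    rw [← hrepXe _ hK]; exact mem_connectedComponentIn hx
  refine ⟨fun K => F (repX K), fun K => ?_, fun K => ?_⟩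
  · simp only
    have hk := hrepp _ K.2
    rw [hFK' _ hk.1]
    have h0 : 0 < g (repp K) := hk.2
    simp only [F, if_pos h0, f', ← hreppe _ K.2, K.2, dif_pos]
  · simp only
    have hk := hrepn _ K.2
    rw [hFK' _ hk.1]
    have h0 : g (repn K) < 0 := hk.2
    simp only [F, if_neg h0.not_gt, if_pos h0, h', ← hrepne _ K.2, K.2, dif_pos]

namespace Arrangement

variable {d n : ℕ} (𝓗 : Arrangement d n)

def gv (i : Fin n) (x : Fin d → ℝ) : ℝ := ∑ j, 𝓗.normal i j * x j - 𝓗.offset i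

def sgn (x : Fin d → ℝ) : Fin n → SignType := fun i => SignType.sign (𝓗.gv i x)

lemma gv_cont (i : Fin n) : Continuous (𝓗.gv i) := by
  unfold gv; fun_prop

lemma gv_comb (i : Fin n) (x y : Fin d → ℝ) (a b : ℝ) (h : a + b = 1) :
    𝓗.gv i (a • x + b • y) = a * 𝓗.gv i x + b * 𝓗.gv i y := by
  have : ∑ j, 𝓗.normal i j * (a • x + b • y) j
      = a * ∑ j, 𝓗.normal i j * x j + b * ∑ j, 𝓗.normal i j * y j := by
    rw [Finset.mul_sum, Finset.mul_sum, ← Finset.sum_add_distrib]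
    refine Finset.sum_congr rfl fun j _ => ?_
    simp; ring
  unfold gv
  rw [this]
  linear_combination (𝓗.offset i) * h

lemma gv_add (i : Fin n) (x v : Fin d → ℝ) (t : ℝ) :
    𝓗.gv i (x + t • v) = 𝓗.gv i x + t * ∑ j, 𝓗.normal i j * v j := by
  unfold gv
  have : ∑ j, 𝓗.normal i j * (x + t • v) j
      = ∑ j, 𝓗.normal i j * x j + t * ∑ j, 𝓗.normal i j * v j := by
    rw [Finset.mul_sum, ← Finset.sum_add_distrib]
    refine Finset.sum_congr rfl fun j _ => ?_
    simp; ring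
  rw [this]; ring

lemma mem_H (i : Fin n) (x : Fin d → ℝ) : x ∈ 𝓗.H i ↔ 𝓗.gv i x = 0 := by
  simp [H, gv, sub_eq_zero]

lemma mem_free (x : Fin d → ℝ) : x ∈ 𝓗.free ↔ ∀ i, 𝓗.sgn x i ≠ 0 := by
  simp [free, mem_H, sgn]

lemma sign_comb {p q a b : ℝ} (ha : 0 ≤ a) (hb : 0 ≤ b) (hab : a + b = 1)
    (h : SignType.sign p = SignType.sign q) : SignType.sign (a * p + b * q) = SignType.sign p := by
  rcases lt_trichotomy p 0 with hp | hp | hp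
  · rw [sign_neg hp] at h ⊢
    have hq := sign_eq_neg_one_iff.1 h.symm
    refine sign_neg ?_
    rcases ha.eq_or_lt with rfl | ha
    · have : b = 1 := by linarith
      subst this; linarith
    · nlinarith [mul_neg_of_pos_of_neg ha hp, mul_nonneg hb (neg_nonneg.2 hq.le)]
  · subst hp
    rw [sign_zero] at h ⊢
    have hq := sign_eq_zero_iff.1 h.symm
    simp [hq]
  · rw [sign_pos hp] at h ⊢
    have hq := sign_eq_one_iff.1 h.symm
    refine sign_pos ?_
    rcases ha.eq_or_lt with rfl | ha
    · have : b = 1 := by linarith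
      subst this; linarith
    · nlinarith [mul_pos ha hp, mul_nonneg hb hq.le]

lemma convex_sgn (i : Fin n) (σ : SignType) : Convex ℝ {x | 𝓗.sgn x i = σ} := by
  intro x hx y hy a b ha hb hab
  simp only [mem_ofPred_eq, sgn] at *
  rw [gv_comb _ _ _ _ _ _ hab, sign_comb ha hb hab (hx.trans hy.symm), hx]

lemma convex_cell (σ : Fin n → SignType) : Convex ℝ {x | 𝓗.sgn x = σ} := by
  have : {x | 𝓗.sgn x = σ} = ⋂ i, {x | 𝓗.sgn x i = σ i} := by
    ext x; simp [funext_iff]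
  rw [this]
  exact convex_iInter fun i => 𝓗.convex_sgn i _

def SignSet (X : Set (Fin d → ℝ)) : Prop := ∀ x y, 𝓗.sgn x = 𝓗.sgn y → x ∈ X → y ∈ X

lemma SignSet.finite {X : Set (Fin d → ℝ)} (hX : 𝓗.SignSet X) : (connComps X).Finite := by
  classical
  refine (finite_range (fun σ : Fin n → SignType =>
    if h : ∃ x, x ∈ X ∧ 𝓗.sgn x = σ then connectedComponentIn X h.choose else ∅)).subset ?_
  rintro _ ⟨x, hx, rfl⟩
  refine ⟨𝓗.sgn x, ?_⟩
  have h : ∃ y, y ∈ X ∧ 𝓗.sgn y = 𝓗.sgn x := ⟨x, hx, rfl⟩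
  simp only [dif_pos h]
  refine cc_eq (K := {z | 𝓗.sgn z = 𝓗.sgn x}) (𝓗.convex_cell _).isPreconnected ?_
    h.choose_spec.2 rfl
  intro z hz
  exact hX x z hz.symm hx

/-- near a point, nonzero signs persist -/
lemma sgn_nhds (x : Fin d → ℝ) :
    ∀ᶠ y in 𝓝 x, ∀ i, 𝓗.sgn x i ≠ 0 → 𝓗.sgn y i = 𝓗.sgn x i := by
  rw [Filter.eventually_all]
  intro i
  rcases lt_trichotomy (𝓗.gv i x) 0 with h | h | h
  · filter_upwards [(isOpen_lt (𝓗.gv_cont i) continuous_const).mem_nhds h] with y hy _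
    simp only [sgn]
    rw [sign_neg h, sign_neg hy]
  · filter_upwards with y hy
    simp [sgn, h] at hy
  · filter_upwards [(isOpen_lt continuous_const (𝓗.gv_cont i)).mem_nhds h] with y hy _
    simp only [sgn]
    rw [sign_pos h, sign_pos hy]

lemma cell_open (x : Fin d → ℝ) (hx : x ∈ 𝓗.free) : {y | 𝓗.sgn y = 𝓗.sgn x} ∈ 𝓝 x := by
  filter_upwards [𝓗.sgn_nhds x] with y hy
  ext i
  rw [hy i ((𝓗.mem_free x).1 hx i)]

lemma cell_isOpen (x : Fin d → ℝ) (hx : x ∈ 𝓗.free) : IsOpen {y | 𝓗.sgn y = 𝓗.sgn x} := by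
  rw [isOpen_iff_mem_nhds]
  intro y hy
  have hy' : y ∈ 𝓗.free := by
    rw [mem_free] at *; rw [show 𝓗.sgn y = 𝓗.sgn x from hy]; exact hx
  have := 𝓗.cell_open y hy'
  rwa [show 𝓗.sgn y = 𝓗.sgn x from hy] at this

lemma chamber_eq (x : Fin d → ℝ) (hx : x ∈ 𝓗.free) :
    connectedComponentIn 𝓗.free x = {y | 𝓗.sgn y = 𝓗.sgn x} := by
  apply Subset.antisymm
  · intro y hy
    refine (isPreconnected_connectedComponentIn (F := 𝓗.free) (x := x)).induction₂'
      (fun x x' => 𝓗.sgn x' = 𝓗.sgn x) ?_ ?_ (mem_connectedComponentIn hx) hy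
    · intro u hu
      filter_upwards [mem_nhdsWithin_of_mem_nhds
        (𝓗.cell_open u (connectedComponentIn_subset _ _ hu))] with v hv
      exact ⟨hv, hv.symm⟩
    · intro a b c _ _ _ h1 h2
      exact h2.trans h1
  · refine (𝓗.convex_cell _).isPreconnected.subset_connectedComponentIn rfl ?_
    intro y hy
    rw [mem_free] at *
    rw [show 𝓗.sgn y = 𝓗.sgn x from hy]; exact hx

lemma free_dense : Dense 𝓗.free := by
  have : 𝓗.free = ⋂ i, {x | 𝓗.gv i x ≠ 0} := by
    ext x; simp [free, mem_H]
  rw [this]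
  refine dense_iInter_of_isOpen (fun i => isOpen_ne_fun (𝓗.gv_cont i) continuous_const) fun i => ?_
  intro x
  by_cases hx : 𝓗.gv i x = 0
  swap
  · exact subset_closure hx
  have hv : 0 < ∑ j, 𝓗.normal i j * 𝓗.normal i j := by
    obtain ⟨j, hj⟩ := Function.ne_iff.1 (𝓗.normal_ne i)
    refine Finset.sum_pos' (fun j _ => mul_self_nonneg _) ⟨j, Finset.mem_univ _, ?_⟩
    exact mul_self_pos.2 hj
  have ht : Filter.Tendsto (fun t : ℝ => x + t • 𝓗.normal i) (𝓝[>] 0) (𝓝 x) := by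
    have : Continuous (fun t : ℝ => x + t • 𝓗.normal i) := by fun_prop
    have := this.tendsto 0
    simp only [zero_smul, add_zero] at this
    exact this.mono_left nhdsWithin_le_nhds
  refine mem_closure_of_tendsto ht ?_
  filter_upwards [self_mem_nhdsWithin] with t ht
  simp only [gv_add, hx, zero_add]
  exact (mul_pos ht hv).ne'

section T
variable {𝓗} {S : Set (Set (Fin d → ℝ))}

lemma cell_mem_S (hS : S ⊆ 𝓗.chambers) {C x} (hC : C ∈ S) (hx : x ∈ C) : x ∈ 𝓗.free ∧ C = {y | 𝓗.sgn y = 𝓗.sgn x} := by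
  obtain ⟨z, hz, rfl⟩ := hS hC
  have hxf := connectedComponentIn_subset _ _ hx
  exact ⟨hxf, by rw [connectedComponentIn_eq hx, chamber_eq _ _ hxf]⟩

lemma T_iff (hS : S ⊆ 𝓗.chambers) (x) (hx : x ∈ 𝓗.free) : x ∈ thickening S ↔ {y | 𝓗.sgn y = 𝓗.sgn x} ∈ S := by
  constructor
  · intro h
    have h1 := interior_subset h
    obtain ⟨y, hy, hyS⟩ := mem_closure_iff_nhds.1 h1 _ (𝓗.cell_open x hx)
    simp only [mem_iUnion] at hyS
    obtain ⟨C, hC, hyC⟩ := hyS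
    obtain ⟨_, h3⟩ := cell_mem_S hS hC hyC
    rw [show 𝓗.sgn y = 𝓗.sgn x from hy] at h3
    rwa [← h3]
  · intro h
    refine interior_maximal (subset_trans ?_ subset_closure) (𝓗.cell_isOpen x hx) rfl
    exact subset_biUnion_of_mem (u := fun C => C) h

lemma T_signSet (hS : S ⊆ 𝓗.chambers) : 𝓗.SignSet (thickening S) := by
  intro x y hxy hx
  obtain ⟨W, hW, hWo, hyW⟩ := mem_nhds_iff.1 (𝓗.sgn_nhds y)
  refine interior_maximal ?_ hWo hyW
  refine (𝓗.free_dense.open_subset_closure_inter hWo).trans (closure_mono ?_)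
  rintro w ⟨hwW, hwf⟩
  have hw := hW hwW
  simp only [mem_ofPred_eq] at hw
  have key : ∀ t : ℝ, 0 < t → t ≤ 1 → 𝓗.sgn (x + t • (w - x)) = 𝓗.sgn w := by
    intro t ht ht1
    ext i
    have e : x + t • (w - x) = (1 - t) • x + t • w := by module
    simp only [sgn]
    rw [e, gv_comb _ _ _ _ _ _ (by ring)]
    by_cases h0 : 𝓗.sgn x i = 0
    · have : 𝓗.gv i x = 0 := by simpa [sgn] using h0
      rw [this, mul_zero, zero_add, sign_mul, sign_pos ht, one_mul]
    · have h2 : 𝓗.sgn x i = 𝓗.sgn w i := by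
        rw [hw i (by rwa [← hxy]), hxy]
      rw [sign_comb (by linarith) ht.le (by ring) h2]
      exact h2
  have ht : Filter.Tendsto (fun t : ℝ => x + t • (w - x)) (𝓝[>] 0) (𝓝 x) := by
    have : Continuous (fun t : ℝ => x + t • (w - x)) := by fun_prop
    have := this.tendsto 0
    simp only [zero_smul, add_zero] at this
    exact this.mono_left nhdsWithin_le_nhds
  have h1 : ∀ᶠ t in 𝓝[>] (0:ℝ), x + t • (w - x) ∈ thickening S :=
    ht.eventually (isOpen_interior.mem_nhds hx)
  have h2 : ∀ᶠ t in 𝓝[>] (0:ℝ), t ≤ 1 := mem_nhdsWithin_of_mem_nhds (Iic_mem_nhds one_pos)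
  obtain ⟨t, ht1, ht2, ht3⟩ := (h1.and (h2.and self_mem_nhdsWithin)).exists
  have hk := key t ht3 ht2
  rw [T_iff hS _ (by rw [mem_free] at *; rwa [hk]), hk] at ht1
  simp only [mem_iUnion]
  exact ⟨_, ht1, rfl⟩

end T

lemma exists_dir (hgp : 𝓗.GeneralPosition) (A : Finset (Fin n)) (i : Fin n) (hi : i ∉ A)
    (x : Fin d → ℝ) (hx : ∀ a ∈ A, 𝓗.gv a x = 0) (hxi : 𝓗.gv i x = 0) :
    ∃ v : Fin d → ℝ, (∀ a ∈ A, ∑ j, 𝓗.normal a j * v j = 0) ∧ 0 < ∑ j, 𝓗.normal i j * v j := by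
  classical
  have hcard : (insert i A).card ≤ d := by
    by_contra hc
    obtain ⟨B, hB, hBc⟩ := Finset.exists_subset_card_eq (s := insert i A) (n := d + 1) (by omega)
    have := hgp.2 B hBc
    have hxB : x ∈ ⋂ i ∈ B, 𝓗.H i := by
      simp only [mem_iInter]
      intro b hb
      rw [mem_H]
      rcases Finset.mem_insert.1 (hB hb) with rfl | h
      · exact hxi
      · exact hx b h
    rw [this] at hxB
    exact hxB
  have hli := hgp.1 _ hcard
  have hns := hli.notMem_span_image (s := {b | b.1 ∈ A})
    (x := ⟨i, Finset.mem_insert_self i A⟩) (by simpa using hi)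
  obtain ⟨f, hf, hfk⟩ := Submodule.exists_le_ker_of_notMem hns
  have hfe : ∀ u : Fin d → ℝ, ∑ j, u j * f (Pi.single j 1) = f u := by
    intro u
    conv_rhs => rw [pi_eq_sum_univ' u]
    simp [map_sum]
  have hA : ∀ a ∈ A, f (𝓗.normal a) = 0 := by
    intro a ha
    have := hfk (Submodule.subset_span
      (mem_image_of_mem _ (show (⟨a, Finset.mem_insert_of_mem ha⟩ : (insert i A : Finset _)) ∈
        {b : (insert i A : Finset (Fin n)) | b.1 ∈ A} from ha)))
    simpa using this
  simp only at hf
  rcases lt_or_gt_of_ne hf with h | h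
  · refine ⟨fun j => - f (Pi.single j 1), fun a ha => ?_, ?_⟩
    · simp [hfe, hA a ha]
    · simp only [mul_neg, Finset.sum_neg_distrib, hfe]; linarith
  · exact ⟨fun j => f (Pi.single j 1), fun a ha => by rw [hfe, hA a ha], by rw [hfe]; exact h⟩

end Arrangement

namespace Arrangement

variable {d n : ℕ} (𝓗 : Arrangement d n)

lemma dirs_aux (A : Finset (Fin n)) (i : Fin n)
    (x : Fin d → ℝ) (hx : ∀ a ∈ A, 𝓗.gv a x = 0) (hxi : 𝓗.gv i x = 0) (v : Fin d → ℝ)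
    (hv : ∀ a ∈ A, ∑ j, 𝓗.normal a j * v j = 0) (U : Set (Fin d → ℝ)) (hU : U ∈ 𝓝 x) :
    ∃ y ∈ U, (∀ a ∈ A, 𝓗.gv a y = 0) ∧ ∃ t : ℝ, 0 < t ∧
      𝓗.gv i y = t * ∑ j, 𝓗.normal i j * v j := by
  have ht : Filter.Tendsto (fun t : ℝ => x + t • v) (𝓝[>] 0) (𝓝 x) := by
    have : Continuous (fun t : ℝ => x + t • v) := by fun_prop
    have := this.tendsto 0
    simp only [zero_smul, add_zero] at this
    exact this.mono_left nhdsWithin_le_nhds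
  have h1 : ∀ᶠ t in 𝓝[>] (0:ℝ), x + t • v ∈ U := ht.eventually hU
  obtain ⟨t, ht1, ht2⟩ := (h1.and self_mem_nhdsWithin).exists
  refine ⟨_, ht1, fun a ha => ?_, t, ht2, ?_⟩
  · rw [gv_add, hx a ha, hv a ha]; simp
  · rw [gv_add, hxi, zero_add]

lemma dirs (hgp : 𝓗.GeneralPosition) (A : Finset (Fin n)) (i : Fin n) (hi : i ∉ A)
    (x : Fin d → ℝ) (hx : ∀ a ∈ A, 𝓗.gv a x = 0) (hxi : 𝓗.gv i x = 0)
    (U : Set (Fin d → ℝ)) (hU : U ∈ 𝓝 x) :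
    (∃ y ∈ U, (∀ a ∈ A, 𝓗.gv a y = 0) ∧ 0 < 𝓗.gv i y) ∧
    (∃ y ∈ U, (∀ a ∈ A, 𝓗.gv a y = 0) ∧ 𝓗.gv i y < 0) := by
  obtain ⟨v, hv, hvi⟩ := 𝓗.exists_dir hgp A i hi x hx hxi
  constructor
  · obtain ⟨y, hy, hyA, t, ht, hyt⟩ := 𝓗.dirs_aux A i x hx hxi v hv U hU
    exact ⟨y, hy, hyA, hyt ▸ mul_pos ht hvi⟩
  · obtain ⟨y, hy, hyA, t, ht, hyt⟩ := 𝓗.dirs_aux A i x hx hxi (-v)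
      (fun a ha => by simp [hv a ha]) U hU
    refine ⟨y, hy, hyA, hyt ▸ ?_⟩
    simp only [Pi.neg_apply, mul_neg, Finset.sum_neg_distrib]
    have := mul_pos ht hvi
    linarith

def XX (T : Set (Fin d → ℝ)) (I : Finset (Fin n)) (σ : Fin n → SignType) (A : Finset (Fin n)) :
    Set (Fin d → ℝ) :=
  {x | x ∈ T ∧ (∀ j, j ∉ I → 𝓗.sgn x j = σ j) ∧ ∀ a ∈ A, 𝓗.sgn x a = 0}

lemma mem_XX {T : Set (Fin d → ℝ)} {I : Finset (Fin n)} {σ : Fin n → SignType}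
    {A : Finset (Fin n)} {x : Fin d → ℝ} : x ∈ 𝓗.XX T I σ A ↔
      x ∈ T ∧ (∀ j, j ∉ I → 𝓗.sgn x j = σ j) ∧ ∀ a ∈ A, 𝓗.sgn x a = 0 := Iff.rfl

lemma XX_signSet {T : Set (Fin d → ℝ)} (hT : 𝓗.SignSet T) (I : Finset (Fin n))
    (σ : Fin n → SignType) (A : Finset (Fin n)) : 𝓗.SignSet (𝓗.XX T I σ A) := by
  intro x y hxy hx
  rw [mem_XX] at *
  rw [← hxy]
  exact ⟨hT x y hxy hx.1, hx.2⟩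

lemma XX_update (T : Set (Fin d → ℝ)) (I : Finset (Fin n))
    (σ : Fin n → SignType) (A : Finset (Fin n)) (i : Fin n) (hi : i ∉ I) (s : SignType) :
    𝓗.XX T I (Function.update σ i s) A = 𝓗.XX T (insert i I) σ A ∩ {x | 𝓗.sgn x i = s} := by
  ext x
  rw [mem_inter_iff, mem_XX, mem_XX, mem_ofPred_eq]
  constructor
  · rintro ⟨h1, h2, h3⟩
    refine ⟨⟨h1, fun j hj => ?_, h3⟩, by simpa using h2 i hi⟩
    simp only [Finset.mem_insert, not_or] at hj
    simpa [Function.update_of_ne hj.1] using h2 j hj.2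
  · rintro ⟨⟨h1, h2, h3⟩, h4⟩
    refine ⟨h1, fun j hj => ?_, h3⟩
    by_cases hji : j = i
    · subst hji; simpa using h4
    · rw [Function.update_of_ne hji]
      exact h2 j (by simp [hji, hj])

lemma XX_insert (T : Set (Fin d → ℝ)) (I : Finset (Fin n))
    (σ : Fin n → SignType) (A : Finset (Fin n)) (i : Fin n) :
    𝓗.XX T I σ (insert i A) = 𝓗.XX T I σ A ∩ {x | 𝓗.sgn x i = 0} := by
  ext x
  rw [mem_inter_iff, mem_XX, mem_XX, mem_ofPred_eq, Finset.forall_mem_insert]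
  tauto

lemma XX_nhds {T : Set (Fin d → ℝ)} (hT : IsOpen T) (I : Finset (Fin n))
    (σ : Fin n → SignType) (hσ : ∀ j, σ j ≠ 0) (A : Finset (Fin n)) (x) (hx : x ∈ 𝓗.XX T I σ A) :
    ∀ᶠ y in 𝓝 x, (∀ a ∈ A, 𝓗.gv a y = 0) → y ∈ 𝓗.XX T I σ A := by
  filter_upwards [hT.mem_nhds hx.1, 𝓗.sgn_nhds x] with y hyT hy hyA
  refine ⟨hyT, fun j hj => ?_, fun a ha => by simp [sgn, hyA a ha]⟩
  rw [← hx.2.1 j hj]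
  exact hy j (by rw [hx.2.1 j hj]; exact hσ j)

open Classical in
def Sg (T : Set (Fin d → ℝ)) : Finset (Fin n → SignType) :=
  Finset.univ.filter (fun τ => ∃ x ∈ 𝓗.free, x ∈ T ∧ 𝓗.sgn x = τ)

open Classical in
def NN (T : Set (Fin d → ℝ)) (I : Finset (Fin n)) (σ : Fin n → SignType) : ℕ :=
  ((𝓗.Sg T).filter (fun τ => ∀ j, j ∉ I → τ j = σ j)).card

lemma mem_Sg {T : Set (Fin d → ℝ)} {τ} :
    τ ∈ 𝓗.Sg T ↔ ∃ x ∈ 𝓗.free, x ∈ T ∧ 𝓗.sgn x = τ := by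
  simp [Sg]

lemma NN_insert (T : Set (Fin d → ℝ)) (I : Finset (Fin n)) (σ : Fin n → SignType) (i : Fin n)
    (hi : i ∉ I) : 𝓗.NN T (insert i I) σ =
      𝓗.NN T I (Function.update σ i 1) + 𝓗.NN T I (Function.update σ i (-1)) := by
  classical
  unfold NN
  rw [← Finset.card_union_of_disjoint]
  · congr 1
    ext τ
    simp only [Finset.mem_union, Finset.mem_filter, ← and_or_left]
    refine and_congr_right fun hτ => ?_
    obtain ⟨x, hx, -, rfl⟩ := 𝓗.mem_Sg.1 hτ
    have h0 := (𝓗.mem_free x).1 hx i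
    have h1 : 𝓗.sgn x i = 1 ∨ 𝓗.sgn x i = -1 := by
      revert h0; generalize 𝓗.sgn x i = s; revert s; decide
    have h2 : ∀ s, 𝓗.sgn x i = s →
        (∀ j ∉ insert i I, 𝓗.sgn x j = σ j) → (∀ j ∉ I, 𝓗.sgn x j = Function.update σ i s j) := by
      intro s hs h j hj
      by_cases hji : j = i
      · subst hji; simpa using hs
      · rw [Function.update_of_ne hji]; exact h j (by simp [hji, hj])
    have h3 : ∀ s, 
        (∀ j ∉ I, 𝓗.sgn x j = Function.update σ i s j) →
        (∀ j ∉ insert i I, 𝓗.sgn x j = σ j) := by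
      intro s h j hj
      simp only [Finset.mem_insert, not_or] at hj
      have := h j hj.2
      rwa [Function.update_of_ne hj.1] at this
    constructor
    · intro h
      exact h1.imp (fun e => h2 _ e h) (fun e => h2 _ e h)
    · rintro (h | h)
      · exact h3 _ h
      · exact h3 _ h
  · rw [Finset.disjoint_left]
    intro τ h1 h2
    have e1 := (Finset.mem_filter.1 h1).2 i hi
    have e2 := (Finset.mem_filter.1 h2).2 i hi
    rw [Function.update_self] at e1 e2
    rw [e1] at e2
    exact absurd e2 (by decide)

lemma update_ne {σ : Fin n → SignType} (hσ : ∀ j, σ j ≠ 0) (i : Fin n) (s : SignType)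
    (hs : s ≠ 0) : ∀ j, Function.update σ i s j ≠ 0 := by
  intro j
  by_cases hji : j = i
  · subst hji; simpa using hs
  · rw [Function.update_of_ne hji]; exact hσ j

lemma sgn_zero_iff (x : Fin d → ℝ) (i) : 𝓗.sgn x i = 0 ↔ 𝓗.gv i x = 0 := sign_eq_zero_iff
lemma sgn_one_iff (x : Fin d → ℝ) (i) : 𝓗.sgn x i = 1 ↔ 0 < 𝓗.gv i x := sign_eq_one_iff
lemma sgn_neg_iff (x : Fin d → ℝ) (i) : 𝓗.sgn x i = -1 ↔ 𝓗.gv i x < 0 := sign_eq_neg_one_iff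

lemma upper (hgp : 𝓗.GeneralPosition) {T : Set (Fin d → ℝ)} (hT : IsOpen T) (hTs : 𝓗.SignSet T)
    (I : Finset (Fin n)) : ∀ (σ : Fin n → SignType), (∀ j, σ j ≠ 0) →
    𝓗.NN T I σ ≤ ∑ A ∈ I.powerset, (connComps (𝓗.XX T I σ A)).ncard := by
  classical
  induction I using Finset.induction_on with
  | empty =>
    intro σ hσ
    simp only [Finset.powerset_empty, Finset.sum_singleton]
    by_cases h : σ ∈ 𝓗.Sg T
    · have h1 : 𝓗.NN T ∅ σ ≤ 1 := by
        unfold NN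
        refine Finset.card_le_one.2 fun a ha b hb => ?_
        simp only [Finset.mem_filter, Finset.notMem_empty, not_false_eq_true, true_imp_iff] at ha hb
        ext j
        rw [ha.2 j, hb.2 j]
      refine h1.trans ?_
      obtain ⟨x, hx, hxT, hxs⟩ := 𝓗.mem_Sg.1 h
      rw [Nat.one_le_iff_ne_zero]
      refine (ncard_pos (SignSet.finite 𝓗 (𝓗.XX_signSet hTs _ _ _))).2 ?_ |>.ne'
      exact ⟨_, x, ⟨hxT, fun j _ => by rw [hxs], by simp⟩, rfl⟩
    · have : 𝓗.NN T ∅ σ = 0 := by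
        unfold NN
        rw [Finset.card_eq_zero, Finset.filter_eq_empty_iff]
        intro τ hτ hh
        apply h
        have : τ = σ := funext fun j => hh j (by simp)
        rwa [← this]
      omega
  | insert i I hi ih =>
    intro σ hσ
    rw [NN_insert _ _ _ _ _ hi, Finset.sum_powerset_insert hi, ← Finset.sum_add_distrib]
    refine (add_le_add (ih _ (update_ne hσ i 1 (by decide)))
      (ih _ (update_ne hσ i (-1) (by decide)))).trans ?_
    rw [← Finset.sum_add_distrib]
    refine Finset.sum_le_sum fun A hA => ?_
    have hiA : i ∉ A := fun h => hi (Finset.mem_powerset.1 hA h)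
    have e1 : 𝓗.XX T I (Function.update σ i 1) A
        = 𝓗.XX T (insert i I) σ A ∩ {x | 0 < 𝓗.gv i x} := by
      rw [XX_update _ _ _ _ _ _ hi]; simp only [sgn_one_iff]
    have e2 : 𝓗.XX T I (Function.update σ i (-1)) A
        = 𝓗.XX T (insert i I) σ A ∩ {x | 𝓗.gv i x < 0} := by
      rw [XX_update _ _ _ _ _ _ hi]; simp only [sgn_neg_iff]
    have e3 : 𝓗.XX T (insert i I) σ (insert i A)
        = 𝓗.XX T (insert i I) σ A ∩ {x | 𝓗.gv i x = 0} := by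
      rw [XX_insert]; simp only [sgn_zero_iff]
    have f1 := SignSet.finite 𝓗 (𝓗.XX_signSet hTs (insert i I) σ A)
    have f2 := SignSet.finite 𝓗 (𝓗.XX_signSet hTs (insert i I) σ (insert i A))
    have f3 := SignSet.finite 𝓗 (𝓗.XX_signSet hTs I (Function.update σ i 1) A)
    have f4 := SignSet.finite 𝓗 (𝓗.XX_signSet hTs I (Function.update σ i (-1)) A)
    rw [e3] at f2 ⊢
    rw [e1] at f3 ⊢
    rw [e2] at f4 ⊢
    have hL : Convex ℝ {x | ∀ a ∈ A, 𝓗.gv a x = 0} := by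
      have : {x | ∀ a ∈ A, 𝓗.gv a x = 0} = ⋂ a ∈ A, {x | 𝓗.sgn x a = 0} := by
        ext x; simp [sgn_zero_iff]
      rw [this]
      exact convex_iInter₂ fun a _ => 𝓗.convex_sgn a 0
    refine glue {x | ∀ a ∈ A, 𝓗.gv a x = 0} _ hL ?_ ?_ (𝓗.gv i) (𝓗.gv_cont i) ?_ ?_ ?_ ?_ ?_
      f1 f2 f3 f4
    · intro x hx a ha
      exact (𝓗.sgn_zero_iff x a).1 (hx.2.2 a ha)
    · intro x hx
      obtain ⟨r, hr, h⟩ := Metric.eventually_nhds_iff_ball.1 (𝓗.XX_nhds hT (insert i I) σ hσ A x hx)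
      exact ⟨r, hr, fun y hy => h y hy.1 hy.2⟩
    · simpa only [sgn_one_iff] using 𝓗.convex_sgn i 1
    · simpa only [sgn_neg_iff] using 𝓗.convex_sgn i (-1)
    · simpa only [sgn_zero_iff] using 𝓗.convex_sgn i 0
    · intro x hx hx0 r hr
      obtain ⟨y, h1, h2, h3⟩ := (𝓗.dirs hgp A i hiA x
        (fun a ha => (𝓗.sgn_zero_iff x a).1 (hx.2.2 a ha)) hx0 _ (Metric.ball_mem_nhds x hr)).1
      exact ⟨y, ⟨h1, h2⟩, h3⟩
    · intro x hx hx0 r hr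
      obtain ⟨y, h1, h2, h3⟩ := (𝓗.dirs hgp A i hiA x
        (fun a ha => (𝓗.sgn_zero_iff x a).1 (hx.2.2 a ha)) hx0 _ (Metric.ball_mem_nhds x hr)).2
      exact ⟨y, ⟨h1, h2⟩, h3⟩

open Classical in
lemma lower (hgp : 𝓗.GeneralPosition) {T : Set (Fin d → ℝ)} (hT : IsOpen T)
    (I : Finset (Fin n)) : ∀ (σ : Fin n → SignType), (∀ j, σ j ≠ 0) →
    ∑ A ∈ I.powerset, (if (𝓗.XX T I σ A).Nonempty then 1 else 0) ≤ 𝓗.NN T I σ := by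
  induction I using Finset.induction_on with
  | empty =>
    intro σ hσ
    simp only [Finset.powerset_empty, Finset.sum_singleton]
    split_ifs with h
    · obtain ⟨x, hxT, hxs, -⟩ := h
      have hxs : 𝓗.sgn x = σ := funext fun j => hxs j (by simp)
      refine Finset.card_pos.2 ⟨σ, Finset.mem_filter.2 ⟨𝓗.mem_Sg.2 ⟨x, ?_, hxT, hxs⟩, by simp⟩⟩
      rw [mem_free, hxs]; exact hσ
    · exact Nat.zero_le _
  | insert i I hi ih =>
    intro σ hσ
    rw [NN_insert _ _ _ _ _ hi, Finset.sum_powerset_insert hi, ← Finset.sum_add_distrib]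
    refine le_trans ?_ (add_le_add (ih _ (update_ne hσ i 1 (by decide)))
      (ih _ (update_ne hσ i (-1) (by decide))))
    rw [← Finset.sum_add_distrib]
    refine Finset.sum_le_sum fun A hA => ?_
    have hiA : i ∉ A := fun h => hi (Finset.mem_powerset.1 hA h)
    have e1 : 𝓗.XX T I (Function.update σ i 1) A
        = 𝓗.XX T (insert i I) σ A ∩ {x | 0 < 𝓗.gv i x} := by
      rw [XX_update _ _ _ _ _ _ hi]; simp only [sgn_one_iff]
    have e2 : 𝓗.XX T I (Function.update σ i (-1)) A
        = 𝓗.XX T (insert i I) σ A ∩ {x | 𝓗.gv i x < 0} := by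
      rw [XX_update _ _ _ _ _ _ hi]; simp only [sgn_neg_iff]
    have e3 : 𝓗.XX T (insert i I) σ (insert i A)
        = 𝓗.XX T (insert i I) σ A ∩ {x | 𝓗.gv i x = 0} := by
      rw [XX_insert]; simp only [sgn_zero_iff]
    rw [e1, e2, e3]
    set X := 𝓗.XX T (insert i I) σ A with hX
    have key : (X ∩ {x | 𝓗.gv i x = 0}).Nonempty →
        (X ∩ {x | 0 < 𝓗.gv i x}).Nonempty ∧ (X ∩ {x | 𝓗.gv i x < 0}).Nonempty := by
      rintro ⟨x, hx, hx0⟩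
      obtain ⟨⟨y, hy1, hy2, hy3⟩, ⟨z, hz1, hz2, hz3⟩⟩ := 𝓗.dirs hgp A i hiA x
        (fun a ha => (𝓗.sgn_zero_iff x a).1 (hx.2.2 a ha)) hx0 _
        (𝓗.XX_nhds hT (insert i I) σ hσ A x hx)
      exact ⟨⟨y, hy1 hy2, hy3⟩, ⟨z, hz1 hz2, hz3⟩⟩
    by_cases h0 : (X ∩ {x | 𝓗.gv i x = 0}).Nonempty
    · rw [if_pos h0, if_pos (key h0).1, if_pos (key h0).2]
      split_ifs <;> omega
    · by_cases h1 : X.Nonempty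
      · obtain ⟨x, hx⟩ := h1
        rcases lt_trichotomy (𝓗.gv i x) 0 with h | h | h
        · have : (X ∩ {x | 𝓗.gv i x < 0}).Nonempty := ⟨x, hx, h⟩
          rw [if_neg h0, if_pos this]
          split_ifs <;> omega
        · exact absurd ⟨x, hx, h⟩ h0
        · have : (X ∩ {x | 0 < 𝓗.gv i x}).Nonempty := ⟨x, hx, h⟩
          rw [if_neg h0, if_pos this]
          split_ifs <;> omega
      · rw [if_neg h0, if_neg h1]; omega

lemma XX_univ (S : Set (Set (Fin d → ℝ))) (A : Finset (Fin n)) (σ) :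
    𝓗.XX (thickening S) Finset.univ σ A = 𝓗.stratum S A := by
  ext x
  simp [mem_XX, stratum, mem_H, sgn_zero_iff]

lemma NN_univ {S : Set (Set (Fin d → ℝ))} (hS : S ⊆ 𝓗.chambers) (σ) :
    S.Finite ∧ 𝓗.NN (thickening S) Finset.univ σ = S.ncard := by
  classical
  have h1 : 𝓗.NN (thickening S) Finset.univ σ = (𝓗.Sg (thickening S)).card := by
    simp [NN]
  have h2 : S = (fun τ => {y | 𝓗.sgn y = τ}) '' (𝓗.Sg (thickening S) : Set (Fin n → SignType)) := by
    ext C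
    constructor
    · intro hC
      obtain ⟨x, hx, rfl⟩ := hS hC
      rw [chamber_eq _ _ hx] at hC ⊢
      exact ⟨𝓗.sgn x, 𝓗.mem_Sg.2 ⟨x, hx, (T_iff hS x hx).2 hC, rfl⟩, rfl⟩
    · rintro ⟨τ, hτ, rfl⟩
      obtain ⟨x, hx, hxT, rfl⟩ := 𝓗.mem_Sg.1 hτ
      exact (T_iff hS x hx).1 hxT
  have h3 : InjOn (fun τ => {y | 𝓗.sgn y = τ}) (𝓗.Sg (thickening S) : Set (Fin n → SignType)) := by
    intro τ hτ τ' _ h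
    obtain ⟨x, hx, hxT, rfl⟩ := 𝓗.mem_Sg.1 hτ
    have : x ∈ {y | 𝓗.sgn y = 𝓗.sgn x} := rfl
    simp only at h
    rw [h] at this
    exact this
  refine ⟨?_, ?_⟩
  · rw [h2]; exact (Finset.finite_toSet _).image _
  · rw [h1]; conv_rhs => rw [h2, ncard_image_of_injOn h3, ncard_coe_finset]

end Arrangement

/-- For a subset `S` of the chambers of an arrangement in general
position in `ℝ^d`, there is an injective map `μ` from `S` into the disjoint union
`⊔_{A ∈ supp S} conn(T_S(A))` hitting at least one component of every stratum;
consequently `|supp S| ≤ |S| ≤ ∑_A |conn(T_S(A))|`. -/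
theorem stmt0 {d n : ℕ} (𝓗 : Arrangement d n) (hgp : 𝓗.GeneralPosition)
    (S : Set (Set (Fin d → ℝ))) (hS : S ⊆ 𝓗.chambers) :
    ∃ μ : S → Finset (Fin n) × Set (Fin d → ℝ),
      Function.Injective μ ∧
      (∀ C : S, (μ C).2 ∈ connComps (𝓗.stratum S (μ C).1)) ∧
      (∀ A ∈ 𝓗.supp S, ∃ C : S, (μ C).1 = A) ∧
      (𝓗.supp S).ncard ≤ S.ncard ∧
      S.ncard ≤ ∑ A : Finset (Fin n), (connComps (𝓗.stratum S A)).ncard := by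
  classical
  have hTo : IsOpen (thickening S) := isOpen_interior
  have hTs := Arrangement.T_signSet hS
  have hσ : ∀ j : Fin n, (fun _ => 1 : Fin n → SignType) j ≠ 0 := fun _ => one_ne_zero
  obtain ⟨hfin, hN⟩ := 𝓗.NN_univ hS (fun _ => 1)
  have hU := 𝓗.upper hgp hTo hTs Finset.univ (fun _ => 1) hσ
  have hL := 𝓗.lower hgp hTo Finset.univ (fun _ => 1) hσ
  simp only [Arrangement.XX_univ, hN, Finset.powerset_univ] at hU hL
  have hcf : ∀ A, (connComps (𝓗.stratum S A)).Finite := fun A => by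
    rw [← 𝓗.XX_univ S A (fun _ => 1)]
    exact Arrangement.SignSet.finite 𝓗 (𝓗.XX_signSet hTs _ _ _)
  have hsupp : (𝓗.supp S).ncard ≤ S.ncard := by
    rw [← Finset.card_filter] at hL
    convert hL
    rw [← ncard_coe_finset]
    congr 1
    ext A
    simp [Arrangement.supp]
  let Z : Finset (Finset (Fin n) × Set (Fin d → ℝ)) :=
    Finset.univ.biUnion (fun A => (hcf A).toFinset.image (fun K => (A, K)))
  have hZ : ∀ p, p ∈ Z ↔ p.2 ∈ connComps (𝓗.stratum S p.1) := by
    rintro ⟨A, K⟩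
    simp [Z]
  have hZc : Z.card = ∑ A : Finset (Fin n), (connComps (𝓗.stratum S A)).ncard := by
    rw [Finset.card_biUnion]
    · refine Finset.sum_congr rfl fun A _ => ?_
      rw [Finset.card_image_of_injective _ (Prod.mk_right_injective A),
        ncard_eq_toFinset_card _ (hcf A)]
    · intro A _ B _ hAB
      simp only [Finset.disjoint_left, Finset.mem_image]
      rintro _ ⟨K, _, rfl⟩ ⟨K', _, h⟩
      exact hAB (congrArg Prod.fst h).symm
  have hsf : (𝓗.supp S).Finite := toFinite _
  choose! pt hpt using (fun A (hA : A ∈ 𝓗.supp S) => hA)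
  let Z0 : Finset (Finset (Fin n) × Set (Fin d → ℝ)) :=
    hsf.toFinset.image (fun A => (A, connectedComponentIn (𝓗.stratum S A) (pt A)))
  have hZ0 : Z0 ⊆ Z := by
    intro p hp
    obtain ⟨A, hA, rfl⟩ := Finset.mem_image.1 hp
    rw [hZ]
    exact ⟨_, hpt A (hsf.mem_toFinset.1 hA), rfl⟩
  have hZ0c : Z0.card ≤ S.ncard := by
    refine Finset.card_image_le.trans ?_
    rwa [← ncard_eq_toFinset_card _ hsf]
  obtain ⟨Z1, h01, h1, hZ1c⟩ := Finset.exists_subsuperset_card_eq hZ0 hZ0c (hZc ▸ hU)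
  have := hfin.fintype
  have hcard : Fintype.card S = Fintype.card Z1 := by
    rw [Fintype.card_coe, hZ1c, ← Nat.card_coe_set_eq, Nat.card_eq_fintype_card]
  let e := Fintype.equivOfCardEq hcard
  refine ⟨fun C => (e C).1, fun a b h => e.injective (Subtype.ext h), fun C => ?_, fun A hA => ?_,
    hsupp, hU⟩
  · exact (hZ _).1 (h1 (e C).2)
  · have hm : (A, connectedComponentIn (𝓗.stratum S A) (pt A)) ∈ Z1 :=
      h01 (Finset.mem_image.2 ⟨A, hsf.mem_toFinset.2 hA, rfl⟩)
    refine ⟨e.symm ⟨_, hm⟩, ?_⟩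
    simp
end
end

section
/- Let S be a strata-connected subset of the chambers of a hyperplane arrangement 𝓗 in general position in ℝ^d. Then |∂S| ≥ Σ_{A∈supp(S)} |b(A)|. -/
open Set Topology

noncomputable section

section Comb
set_option linter.unusedSectionVars false
open Finset
variable {α : Type*} [Fintype α] [DecidableEq α]

def fib (X : Finset (Finset α)) (A : Finset α) : Finset (Finset α) :=
  Finset.univ.filter (fun u => Disjoint u A ∧ ∀ t, t ⊆ A → u ∪ t ∈ X)

lemma symmDiff_single_notMem {u : Finset α} {e : α} (h : e ∉ u) :
    symmDiff u {e} = insert e u := by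
  ext x; simp only [Finset.mem_symmDiff, Finset.mem_singleton, Finset.mem_insert]; grind

lemma symmDiff_single_mem {u : Finset α} {e : α} (h : e ∈ u) :
    symmDiff u {e} = u.erase e := by
  ext x; simp only [Finset.mem_symmDiff, Finset.mem_singleton, Finset.mem_erase]; grind

lemma mem_symmDiff_single {u : Finset α} {e x : α} :
    x ∈ symmDiff u {e} ↔ ((x ∈ u ∧ x ≠ e) ∨ (x ∉ u ∧ x = e)) := by
  simp only [Finset.mem_symmDiff, Finset.mem_singleton]; grind

lemma mem_fib {X : Finset (Finset α)} {A u : Finset α} :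
    u ∈ fib X A ↔ Disjoint u A ∧ ∀ t, t ⊆ A → u ∪ t ∈ X := by simp [fib]

def GConn (Y : Finset (Finset α)) : Prop :=
  ∀ P : Finset (Finset α), P ⊆ Y → P.Nonempty →
    (∀ p ∈ P, ∀ e, symmDiff p {e} ∈ Y → symmDiff p {e} ∈ P) → P = Y

def AllConn (X : Finset (Finset α)) : Prop := ∀ A, GConn (fib X A)

def stF (X : Finset (Finset α)) : Finset (Finset α) :=
  Finset.univ.filter (fun A => (fib X A).Nonempty)

lemma card_stF_le (X : Finset (Finset α)) : (stF X).card ≤ X.card := by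
  classical
  have h1 : ((stF X).image compl) ⊆ (Xᶜ).shattererᶜ := by
    intro B hB
    simp only [Finset.mem_image, stF, Finset.mem_filter, Finset.mem_univ, true_and] at hB
    obtain ⟨A, ⟨u, hu⟩, rfl⟩ := hB
    rw [mem_fib] at hu
    rw [Finset.mem_compl, Finset.mem_shatterer]
    intro hs
    have hd : u ⊆ Aᶜ := by
      intro x hx; rw [Finset.mem_compl]; exact Finset.disjoint_left.1 hu.1 hx
    obtain ⟨w, hw, hwu⟩ := hs hd
    rw [Finset.mem_compl] at hw
    apply hw
    have := hu.2 (w ∩ A) Finset.inter_subset_right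
    convert this using 1
    rw [← hwu]; ext x; simp only [Finset.mem_union, Finset.mem_inter, Finset.mem_compl]; tauto
  have h2 := Finset.card_le_card h1
  rw [Finset.card_image_of_injective _ compl_injective, Finset.card_compl] at h2
  have h3 := Finset.card_le_card_shatterer (Xᶜ)
  have h4 := Finset.card_compl X
  have h5 : X.card ≤ Fintype.card (Finset α) := Finset.card_le_univ X
  omega

lemma GConn_empty : GConn (∅ : Finset (Finset α)) := by
  intro P hP hne; 
  rw [Finset.subset_empty] at hP; simp [hP] at hne

/-- half-space restriction -/
def half (X : Finset (Finset α)) (e : α) (b : Prop) : Finset (Finset α) := by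
  classical exact X.filter (fun u => (e ∈ u ↔ b))

lemma mem_half {X : Finset (Finset α)} {e : α} {b : Prop} {u : Finset α} :
    u ∈ half X e b ↔ u ∈ X ∧ (e ∈ u ↔ b) := by simp [half]

lemma fib_half {X : Finset (Finset α)} {e : α} {b : Prop} {A : Finset α} (he : e ∉ A) :
    fib (half X e b) A = half (fib X A) e b := by
  ext u
  simp only [mem_fib, mem_half, Finset.mem_union]
  constructor
  · rintro ⟨h1, h2⟩
    refine ⟨⟨h1, fun t ht => (h2 t ht).1⟩, ?_⟩
    have := (h2 ∅ (Finset.empty_subset _)).2; simpa using this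
  · rintro ⟨⟨h1, h2⟩, h3⟩
    refine ⟨h1, fun t ht => ⟨h2 t ht, ?_⟩⟩
    have : e ∉ t := fun h => he (ht h)
    tauto

lemma fib_half_mem {X : Finset (Finset α)} {e : α} {b : Prop} {A : Finset α} (he : e ∈ A) :
    fib (half X e b) A = ∅ := by
  rw [Finset.eq_empty_iff_forall_notMem]
  intro u hu
  rw [mem_fib] at hu
  have h1 := (mem_half.1 (hu.2 ∅ (Finset.empty_subset _))).2
  have h2 := (mem_half.1 (hu.2 A subset_rfl)).2
  have := Finset.disjoint_right.1 hu.1 he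
  simp [he, this] at h1 h2
  tauto

lemma mem_fib_insert {X : Finset (Finset α)} {e : α} {A u : Finset α} (he : e ∉ A) :
    u ∈ fib X (insert e A) ↔ e ∉ u ∧ u ∈ fib X A ∧ insert e u ∈ fib X A := by
  simp only [mem_fib]
  constructor
  · rintro ⟨h1, h2⟩
    rw [Finset.disjoint_insert_right] at h1
    refine ⟨h1.1, ⟨h1.2, fun t ht => h2 t (ht.trans (Finset.subset_insert _ _))⟩, ?_, ?_⟩
    · rw [Finset.disjoint_insert_left]; exact ⟨he, h1.2⟩
    · intro t ht
      have := h2 (insert e t) (Finset.insert_subset_insert _ ht)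
      rwa [Finset.union_insert, ← Finset.insert_union] at this
  · rintro ⟨h0, ⟨h1, h2⟩, h3, h4⟩
    refine ⟨Finset.disjoint_insert_right.2 ⟨h0, h1⟩, fun t ht => ?_⟩
    by_cases het : e ∈ t
    · have := h4 (t.erase e) (by intro x hx; have := ht (Finset.mem_of_mem_erase hx); grind)
      rwa [Finset.insert_union, ← Finset.union_insert, Finset.insert_erase het] at this
    · exact h2 t (by intro x hx; have := ht hx; grind)

lemma GConn_half {Y : Finset (Finset α)} {e : α} {b : Prop} (hY : GConn Y)
    (hYe : ∀ P : Finset (Finset α), (∀ p ∈ P, e ∉ p ∧ p ∈ Y ∧ insert e p ∈ Y) → P.Nonempty →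
      (∀ p ∈ P, ∀ i, e ∉ symmDiff p {i} → symmDiff p {i} ∈ Y → insert e (symmDiff p {i}) ∈ Y →
        symmDiff p {i} ∈ P) → ∀ q, e ∉ q → q ∈ Y → insert e q ∈ Y → q ∈ P) :
    GConn (half Y e b) := by
  classical
  -- main: given closed P, all of X^e on one side
  intro P hP hne hcl
  by_contra hPne
  -- lift of u : its representative in the half
  let lf : Finset α → Finset α := fun u => if b then insert e u else u
  have hlf : ∀ u, e ∉ u → u ∈ Y → insert e u ∈ Y → lf u ∈ half Y e b := by
    intro u h1 h2 h3
    rw [mem_half]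
    by_cases hb : b <;> simp [lf, hb, h1, h2, h3]
  have hlfs : ∀ u i, e ∉ u → e ∉ symmDiff u {i} → lf (symmDiff u {i}) = symmDiff (lf u) {i} := by
    intro u i h1 h2
    have hie : i ≠ e := by
      rintro rfl; apply h2; rw [symmDiff_single_notMem h1]; simp
    by_cases hb : b
    · simp only [lf, hb, if_true]; ext x; simp only [Finset.mem_insert, mem_symmDiff_single]; grind
    · simp [lf, hb]
  -- closed Q with crossing-free
  have key : ∀ Q : Finset (Finset α), Q ⊆ half Y e b → Q.Nonempty → Q ≠ half Y e b →
      (∀ p ∈ Q, ∀ i, symmDiff p {i} ∈ half Y e b → symmDiff p {i} ∈ Q) →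
      ∃ u, e ∉ u ∧ u ∈ Y ∧ insert e u ∈ Y ∧ lf u ∈ Q := by
    intro Q hQ hQn hQne hQcl
    by_contra hcon
    push Not at hcon
    have hQY : Q = Y := by
      apply hY Q (fun u hu => (mem_half.1 (hQ hu)).1) hQn
      intro p hp i hpi
      by_cases hm : symmDiff p {i} ∈ half Y e b
      · exact hQcl p hp i hm
      · exfalso
        have hpY := mem_half.1 (hQ hp)
        have hie : i = e := by
          by_contra hie
          apply hm
          rw [mem_half]
          refine ⟨hpi, ?_⟩
          rw [← hpY.2, mem_symmDiff_single]; grind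
        subst hie
        by_cases hip : i ∈ p
        · have hb : b := hpY.2.1 hip
          rw [symmDiff_single_mem hip] at hpi
          refine hcon (p.erase i) (by simp) hpi (by rw [Finset.insert_erase hip]; exact hpY.1) ?_
          simp only [lf, hb, if_true]; rwa [Finset.insert_erase hip]
        · have hb : ¬ b := fun h => hip (hpY.2.2 h)
          rw [symmDiff_single_notMem hip] at hpi
          refine hcon p hip hpY.1 hpi ?_
          simpa only [lf, hb, if_false] using hp
    apply hQne
    apply Finset.Subset.antisymm hQ
    rw [hQY]; intro u hu; exact (mem_half.1 hu).1
  obtain ⟨u, hu1, hu2, hu3, hu4⟩ := key P hP hne hPne hcl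
  obtain ⟨v, hv1, hv2, hv3, hv4⟩ := key (half Y e b \ P) Finset.sdiff_subset
    (by
      rw [Finset.sdiff_nonempty]; intro h; exact hPne (Finset.Subset.antisymm hP h))
    (by
      intro h
      obtain ⟨p, hp⟩ := hne
      have := hP hp
      rw [← h] at this
      exact (Finset.mem_sdiff.1 this).2 hp)
    (by
      intro p hp i hi
      rw [Finset.mem_sdiff] at hp ⊢
      refine ⟨hi, fun h => hp.2 ?_⟩
      have := hcl _ h i
      rw [symmDiff_symmDiff_cancel_right] at this
      exact this hp.1)
  have := hYe (Finset.univ.filter (fun u => (e ∉ u ∧ u ∈ Y ∧ insert e u ∈ Y) ∧ lf u ∈ P))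
    (by intro p hp; exact (Finset.mem_filter.1 hp).2.1)
    ⟨u, by simp [hu1, hu2, hu3, hu4]⟩
    (by
      intro p hp i h1 h2 h3
      have hp' := (Finset.mem_filter.1 hp).2
      refine Finset.mem_filter.2 ⟨Finset.mem_univ _, ⟨h1, h2, h3⟩, ?_⟩
      rw [hlfs p i hp'.1.1 h1]
      apply hcl _ hp'.2
      rw [← hlfs p i hp'.1.1 h1]
      exact hlf _ h1 h2 h3) v hv1 hv2 hv3
  exact (Finset.mem_sdiff.1 hv4).2 (Finset.mem_filter.1 this).2.2

lemma AllConn.restrictHalf {X : Finset (Finset α)} (hX : AllConn X) (e : α) (b : Prop) :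
    AllConn (half X e b) := by
  intro A
  by_cases he : e ∈ A
  · rw [fib_half_mem he]; exact GConn_empty
  · rw [fib_half he]
    apply GConn_half (hX A)
    intro P hP hne hcl q h1 h2 h3
    have := hX (insert e A) P (fun p hp => (mem_fib_insert he).2 (hP p hp)) hne (by
      intro p hp i hi
      rw [mem_fib_insert he] at hi
      exact hcl p hp i hi.1 hi.2.1 hi.2.2)
    rw [this, mem_fib_insert he]; exact ⟨h1, h2, h3⟩

lemma AllConn.fib_single {X : Finset (Finset α)} (hX : AllConn X) (e : α) :
    AllConn (fib X {e}) := by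
  intro A
  by_cases he : e ∈ A
  · suffices h0 : fib (fib X {e}) A = ∅ by rw [h0]; exact GConn_empty
    rw [Finset.eq_empty_iff_forall_notMem]
    intro u hu
    rw [mem_fib] at hu
    have h1 := (mem_fib.1 (hu.2 A subset_rfl)).1
    simp [he] at h1
  · convert hX (insert e A) using 1
    ext u
    rw [mem_fib]
    constructor
    · rintro ⟨h1, h2⟩
      have h3 : e ∉ u := by
        have := (mem_fib.1 (h2 ∅ (by simp))).1
        simpa using this
      rw [mem_fib_insert he, mem_fib, mem_fib]
      refine ⟨h3, ⟨h1, fun t ht => ?_⟩, ?_, fun t ht => ?_⟩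
      · simpa using (mem_fib.1 (h2 t ht)).2 ∅ (by simp)
      · simp [he, h1]
      · have := (mem_fib.1 (h2 t ht)).2 {e} (by simp)
        convert this using 1
        ext x; simp
    · rw [mem_fib_insert he, mem_fib, mem_fib]
      rintro ⟨h3, ⟨h1, h2⟩, h4, h5⟩
      refine ⟨h1, fun t ht => ?_⟩
      rw [mem_fib]
      refine ⟨?_, fun s hs => ?_⟩
      · have : e ∉ t := fun h => he (ht h)
        simp [h3, this]
      · rcases Finset.subset_singleton_iff.1 hs with rfl | rfl
        · simpa using h2 t ht
        · convert h5 t ht using 1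
          ext x; simp

lemma AllConn.strong (A : Finset α) : ∀ {X : Finset (Finset α)}, AllConn X → X.Shatters A →
    (fib X A).Nonempty := by
  induction A using Finset.induction_on with
  | empty =>
    intro X hX hs
    obtain ⟨u, hu, -⟩ := hs (t := ∅) (by simp)
    refine ⟨u, ?_⟩
    rw [mem_fib]; refine ⟨by simp, fun t ht => ?_⟩
    rw [Finset.subset_empty] at ht; simpa [ht] using hu
  | insert e B he ih =>
    intro X hX hs
    have h : ∀ b : Prop, ∃ u ∈ fib X B, (e ∈ u ↔ b) := by
      intro b
      have hsh : (half X e b).Shatters B := by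
        intro t ht
        by_cases hb : b
        · obtain ⟨u, hu, hut⟩ := hs (t := insert e t) (Finset.insert_subset_insert _ ht)
          refine ⟨u, ?_, ?_⟩
          · have : e ∈ insert e B ∩ u := by rw [hut]; simp
            rw [mem_half]; simp at this; tauto
          · ext x
            have := Finset.ext_iff.1 hut x
            simp at this ⊢
            have h2 := @ht x
            by_cases hx : x = e
            · subst hx; tauto
            · tauto
        · obtain ⟨u, hu, hut⟩ := hs (t := t) (ht.trans (Finset.subset_insert _ _))
          have het : e ∉ t := fun h => he (ht h)
          refine ⟨u, ?_, ?_⟩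
          · have : e ∉ insert e B ∩ u := by rw [hut]; exact het
            rw [mem_half]; simp at this; tauto
          · ext x
            have := Finset.ext_iff.1 hut x
            simp at this ⊢
            have h2 := @ht x
            by_cases hx : x = e
            · subst hx; tauto
            · tauto
      obtain ⟨u, hu⟩ := ih (hX.restrictHalf e b) hsh
      rw [fib_half he, mem_half] at hu
      exact ⟨u, hu⟩
    obtain ⟨u, hu, hue⟩ := h False
    obtain ⟨v, hv, hve⟩ := h True
    by_contra hcon
    rw [Finset.not_nonempty_iff_eq_empty] at hcon
    have hP := hX B (half (fib X B) e False) (fun w hw => (mem_half.1 hw).1)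
      ⟨u, mem_half.2 ⟨hu, hue⟩⟩ (by
        intro p hp i hi
        rw [mem_half] at hp ⊢
        refine ⟨hi, ?_⟩
        have hep : e ∉ p := by simpa using hp.2
        by_cases hie : i = e
        · subst hie
          exfalso
          rw [symmDiff_single_notMem hep] at hi
          have : p ∈ fib X (insert i B) := (mem_fib_insert he).2 ⟨hep, hp.1, hi⟩
          rw [hcon] at this; simp at this
        · rw [mem_symmDiff_single]; grind)
    rw [← hP, mem_half] at hv
    tauto

lemma AllConn.card_le {X : Finset (Finset α)} (hX : AllConn X) : X.card ≤ (stF X).card := by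
  refine (Finset.card_le_card_shatterer X).trans (Finset.card_le_card ?_)
  intro A hA
  rw [Finset.mem_shatterer] at hA
  simp only [stF, Finset.mem_filter, Finset.mem_univ, true_and]
  exact hX.strong A hA

lemma stF_mono {X Y : Finset (Finset α)} (h : X ⊆ Y) : stF X ⊆ stF Y := by
  intro A
  simp only [stF, Finset.mem_filter, Finset.mem_univ, true_and]
  rintro ⟨u, hu⟩
  rw [mem_fib] at hu
  exact ⟨u, mem_fib.2 ⟨hu.1, fun t ht => h (hu.2 t ht)⟩⟩

lemma card_sdiff_key {X F B : Finset (Finset α)} (hX : AllConn X) (h : X ⊆ F)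
    (hB : B ⊆ stF F \ stF X) : B.card ≤ (F \ X).card := by
  have h1 := Finset.card_le_card hB
  rw [Finset.card_sdiff_of_subset (stF_mono h)] at h1
  rw [Finset.card_sdiff_of_subset h]
  have := hX.card_le
  have := card_stF_le F
  omega

/-- Combinatorial conclusion for one coordinate. -/
lemma comb_main {S C : Finset (Finset α)} (hS : AllConn S) (hSC : S ⊆ C) (f : α)
    (Bp Bm : Finset (Finset α))
    (hBp : ∀ A ∈ Bp, A ∉ stF (fib S {f}) ∧ ∃ u, Disjoint u A ∧ ∀ t, t ⊆ A →
      f ∉ u ∪ t ∧ insert f (u ∪ t) ∈ S ∧ u ∪ t ∈ C)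
    (hBm : ∀ A ∈ Bm, A ∉ stF (fib S {f}) ∧ ∃ u, Disjoint u A ∧ ∀ t, t ⊆ A →
      f ∉ u ∪ t ∧ u ∪ t ∈ S ∧ insert f (u ∪ t) ∈ C) :
    (Bp ∪ Bm).card ≤ (S.filter (fun u => symmDiff u {f} ∈ C ∧ symmDiff u {f} ∉ S)).card := by
  have hX := hS.fib_single f
  have hmem : ∀ u, u ∈ fib S {f} ↔ f ∉ u ∧ u ∈ S ∧ insert f u ∈ S := by
    intro u
    have := mem_fib_insert (X := S) (e := f) (A := ∅) (u := u) (by simp)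
    rw [show insert f (∅ : Finset α) = {f} from rfl] at this
    rw [this]; simp [mem_fib, Finset.subset_empty]
  set X := fib S {f} with hXdef
  let Fp : Finset (Finset α) := Finset.univ.filter (fun u => f ∉ u ∧ insert f u ∈ S ∧ u ∈ C)
  let Fm : Finset (Finset α) := Finset.univ.filter (fun u => f ∉ u ∧ u ∈ S ∧ insert f u ∈ C)
  have hp : Bp.card ≤ (Fp \ X).card := by
    apply card_sdiff_key hX
    · intro u hu; rw [hmem] at hu; simp [Fp, hu, hSC hu.2.1]
    · intro A hA
      obtain ⟨h1, u, h2, h3⟩ := hBp A hA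
      rw [Finset.mem_sdiff]
      refine ⟨?_, h1⟩
      simp only [stF, Finset.mem_filter, Finset.mem_univ, true_and]
      refine ⟨u, mem_fib.2 ⟨h2, fun t ht => ?_⟩⟩
      simp only [Fp, Finset.mem_filter, Finset.mem_univ, true_and]
      exact h3 t ht
  have hm : Bm.card ≤ (Fm \ X).card := by
    apply card_sdiff_key hX
    · intro u hu; rw [hmem] at hu; simp [Fm, hu, hSC hu.2.2]
    · intro A hA
      obtain ⟨h1, u, h2, h3⟩ := hBm A hA
      rw [Finset.mem_sdiff]
      refine ⟨?_, h1⟩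
      simp only [stF, Finset.mem_filter, Finset.mem_univ, true_and]
      refine ⟨u, mem_fib.2 ⟨h2, fun t ht => ?_⟩⟩
      simp only [Fm, Finset.mem_filter, Finset.mem_univ, true_and]
      exact h3 t ht
  have hnp : ∀ u ∈ Fp \ X, f ∉ u ∧ insert f u ∈ S ∧ u ∈ C ∧ u ∉ S := by
    intro u hu
    simp only [Finset.mem_sdiff, Fp, Finset.mem_filter, Finset.mem_univ, true_and, hmem] at hu
    tauto
  have hnm : ∀ u ∈ Fm \ X, f ∉ u ∧ u ∈ S ∧ insert f u ∈ C ∧ insert f u ∉ S := by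
    intro u hu
    simp only [Finset.mem_sdiff, Fm, Finset.mem_filter, Finset.mem_univ, true_and, hmem] at hu
    tauto
  have himg : ((Fp \ X).image (insert f)).card = (Fp \ X).card := by
    apply Finset.card_image_of_injOn
    intro u hu v hv huv
    have h1 := (hnp u hu).1
    have h2 := (hnp v hv).1
    have := congrArg (fun w => w.erase f) huv
    simpa [Finset.erase_insert, h1, h2] using this
  have hdis : Disjoint ((Fp \ X).image (insert f)) (Fm \ X) := by
    rw [Finset.disjoint_left]
    intro u hu hu'
    have := (hnm u hu').1
    rw [Finset.mem_image] at hu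
    obtain ⟨v, -, rfl⟩ := hu
    simp at this
  calc (Bp ∪ Bm).card ≤ Bp.card + Bm.card := Finset.card_union_le _ _
    _ ≤ (Fp \ X).card + (Fm \ X).card := by omega
    _ = ((Fp \ X).image (insert f) ∪ (Fm \ X)).card := by
        rw [Finset.card_union_of_disjoint hdis, himg]
    _ ≤ _ := by
        apply Finset.card_le_card
        intro u hu
        rw [Finset.mem_filter]
        rw [Finset.mem_union, Finset.mem_image] at hu
        rcases hu with ⟨v, hv, rfl⟩ | hu
        · have := hnp v hv
          rw [symmDiff_single_mem (by simp), Finset.erase_insert this.1]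
          tauto
        · have := hnm u hu
          rw [symmDiff_single_notMem this.1]
          tauto

end Comb

namespace Arrangement
variable {d n : ℕ} (𝓗 : Arrangement d n)

def val (i : Fin n) (x : Fin d → ℝ) : ℝ := ∑ j, 𝓗.normal i j * x j - 𝓗.offset i

lemma mem_H_iff {i : Fin n} {x : Fin d → ℝ} : x ∈ 𝓗.H i ↔ 𝓗.val i x = 0 := by
  simp [H, val, sub_eq_zero]

lemma mem_pos_iff {i : Fin n} {x : Fin d → ℝ} : x ∈ 𝓗.pos i ↔ 0 < 𝓗.val i x := by
  simp [pos, val]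

lemma mem_neg_iff {i : Fin n} {x : Fin d → ℝ} : x ∈ 𝓗.neg i ↔ 𝓗.val i x < 0 := by
  simp [neg, val]

lemma continuous_val (i : Fin n) : Continuous (𝓗.val i) := by
  unfold val; fun_prop

lemma val_combo (i : Fin n) (x y : Fin d → ℝ) (a b : ℝ) (h : a + b = 1) :
    𝓗.val i (a • x + b • y) = a * 𝓗.val i x + b * 𝓗.val i y := by
  simp only [val, Pi.add_apply, Pi.smul_apply, smul_eq_mul, mul_sub, Finset.mul_sum]
  have : ∑ j, 𝓗.normal i j * (a * x j + b * y j) =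
      ∑ j, a * (𝓗.normal i j * x j) + ∑ j, b * (𝓗.normal i j * y j) := by
    rw [← Finset.sum_add_distrib]; apply Finset.sum_congr rfl; intros; ring
  rw [this]
  linear_combination 𝓗.offset i * h

lemma val_ray (i : Fin n) (x w : Fin d → ℝ) (a : ℝ) :
    𝓗.val i (x + a • w) = 𝓗.val i x + a * ∑ j, 𝓗.normal i j * w j := by
  simp only [val, Pi.add_apply, Pi.smul_apply, smul_eq_mul, mul_add, Finset.sum_add_distrib,
    Finset.mul_sum]
  have : ∑ j, 𝓗.normal i j * (a * w j) = ∑ j, a * (𝓗.normal i j * w j) := by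
    apply Finset.sum_congr rfl; intros; ring
  rw [this]; ring

def Zs (x : Fin d → ℝ) : Finset (Fin n) := Finset.univ.filter (fun i => 𝓗.val i x = 0)
def Ps (x : Fin d → ℝ) : Finset (Fin n) := Finset.univ.filter (fun i => 0 < 𝓗.val i x)

lemma mem_Zs {x : Fin d → ℝ} {i : Fin n} : i ∈ 𝓗.Zs x ↔ 𝓗.val i x = 0 := by simp [Zs]
lemma mem_Ps {x : Fin d → ℝ} {i : Fin n} : i ∈ 𝓗.Ps x ↔ 0 < 𝓗.val i x := by simp [Ps]

def Cell (u : Finset (Fin n)) : Set (Fin d → ℝ) :=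
  {x | ∀ i, (i ∈ u → 0 < 𝓗.val i x) ∧ (i ∉ u → 𝓗.val i x < 0)}

lemma mem_Cell {u : Finset (Fin n)} {x : Fin d → ℝ} :
    x ∈ 𝓗.Cell u ↔ ∀ i, (i ∈ u → 0 < 𝓗.val i x) ∧ (i ∉ u → 𝓗.val i x < 0) := Iff.rfl

lemma mem_Cell_iff {u : Finset (Fin n)} {x : Fin d → ℝ} :
    x ∈ 𝓗.Cell u ↔ 𝓗.Zs x = ∅ ∧ 𝓗.Ps x = u := by
  rw [mem_Cell, Finset.eq_empty_iff_forall_notMem, Finset.ext_iff]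
  simp only [mem_Zs, mem_Ps]
  constructor
  · intro h
    refine ⟨fun i hi => ?_, fun i => ⟨fun hi => ?_, (h i).1⟩⟩
    · by_cases hu : i ∈ u
      · linarith [(h i).1 hu]
      · linarith [(h i).2 hu]
    · by_contra hu; linarith [(h i).2 hu]
  · rintro ⟨h1, h2⟩ i
    refine ⟨(h2 i).2, fun hu => ?_⟩
    have h3 : ¬ 0 < 𝓗.val i x := fun h => hu ((h2 i).1 h)
    exact lt_of_le_of_ne (not_lt.1 h3) (h1 i)

lemma Cell_eq {u v : Finset (Fin n)} {x : Fin d → ℝ} (h : x ∈ 𝓗.Cell u) (h' : x ∈ 𝓗.Cell v) :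
    u = v := by
  rw [mem_Cell_iff] at h h'; rw [← h.2, h'.2]

lemma ev_signs (x : Fin d → ℝ) : ∀ᶠ y in 𝓝 x, ∀ i,
    (0 < 𝓗.val i x → 0 < 𝓗.val i y) ∧ (𝓗.val i x < 0 → 𝓗.val i y < 0) := by
  rw [Filter.eventually_all]
  intro i
  apply Filter.Eventually.and
  · by_cases h : 0 < 𝓗.val i x
    · filter_upwards [(𝓗.continuous_val i).continuousAt.eventually (lt_mem_nhds h)] with y hy _
      exact hy
    · exact Filter.Eventually.of_forall fun y h' => absurd h' h
  · by_cases h : 𝓗.val i x < 0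
    · filter_upwards [(𝓗.continuous_val i).continuousAt.eventually (gt_mem_nhds h)] with y hy _
      exact hy
    · exact Filter.Eventually.of_forall fun y h' => absurd h' h

lemma ev_sets (x : Fin d → ℝ) : ∀ᶠ y in 𝓝 x,
    𝓗.Zs y ⊆ 𝓗.Zs x ∧ ∃ t, t ⊆ 𝓗.Zs x \ 𝓗.Zs y ∧ 𝓗.Ps y = 𝓗.Ps x ∪ t := by
  filter_upwards [𝓗.ev_signs x] with y hy
  refine ⟨fun i hi => ?_, 𝓗.Ps y \ 𝓗.Ps x, fun i hi => ?_, ?_⟩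
  · rw [mem_Zs] at *
    by_contra h
    rcases lt_or_gt_of_ne h with h | h
    · linarith [(hy i).2 h]
    · linarith [(hy i).1 h]
  · simp only [Finset.mem_sdiff, mem_Ps, mem_Zs, not_lt] at *
    refine ⟨?_, by linarith⟩
    by_contra h
    have := (hy i).2 (lt_of_le_of_ne hi.2 h)
    linarith
  · rw [Finset.union_sdiff_of_subset]
    intro i hi; rw [mem_Ps] at *; exact (hy i).1 hi

lemma isOpen_Cell (u : Finset (Fin n)) : IsOpen (𝓗.Cell u) := by
  rw [isOpen_iff_mem_nhds]
  intro x hx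
  filter_upwards [𝓗.ev_signs x] with y hy i
  exact ⟨fun h => (hy i).1 ((hx i).1 h), fun h => (hy i).2 ((hx i).2 h)⟩

lemma convex_Cell (u : Finset (Fin n)) : Convex ℝ (𝓗.Cell u) := by
  intro x hx y hy a b ha hb hab i
  rw [𝓗.val_combo i x y a b hab]
  rcases ha.eq_or_lt with rfl | ha
  · have : b = 1 := by linarith
    subst this; simpa using hy i
  · refine ⟨fun h => ?_, fun h => ?_⟩
    · have h1 := mul_pos ha ((hx i).1 h)
      have h2 := mul_nonneg hb ((hy i).1 h).le
      linarith
    · have h1 := mul_neg_of_pos_of_neg ha ((hx i).2 h)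
      have h2 := mul_nonpos_of_nonneg_of_nonpos hb ((hy i).2 h).le
      linarith

lemma mem_free_iff {x : Fin d → ℝ} : x ∈ 𝓗.free ↔ 𝓗.Zs x = ∅ := by
  rw [Finset.eq_empty_iff_forall_notMem]
  simp [free, mem_H_iff, mem_Zs]

lemma comp_eq {x : Fin d → ℝ} (hx : x ∈ 𝓗.free) :
    connectedComponentIn 𝓗.free x = 𝓗.Cell (𝓗.Ps x) := by
  apply Set.Subset.antisymm
  · intro y hy
    have hsub := connectedComponentIn_subset 𝓗.free x
    have := (isPreconnected_connectedComponentIn (F := 𝓗.free) (x := x)).induction₂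
      (fun a b => 𝓗.Ps a = 𝓗.Ps b) (by
        intro a ha
        apply Filter.Eventually.filter_mono nhdsWithin_le_nhds
        filter_upwards [𝓗.ev_sets a] with b hb
        have h0 := 𝓗.mem_free_iff.1 (hsub ha)
        obtain ⟨-, t, ht, hb⟩ := hb
        rw [h0] at ht
        have : t = ∅ := by simpa using ht
        rw [hb, this, Finset.union_empty]) (by
        intro a b c _ _ _ h1 h2; exact h1.trans h2) (by intro a b _ _ h; exact h.symm)
      (mem_connectedComponentIn hx) hy
    rw [mem_Cell_iff]
    exact ⟨𝓗.mem_free_iff.1 (hsub hy), this.symm⟩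
  · apply (𝓗.convex_Cell _).isPreconnected.subset_connectedComponentIn
    · rw [mem_Cell_iff]; exact ⟨𝓗.mem_free_iff.1 hx, rfl⟩
    · intro y hy; rw [mem_Cell_iff] at hy; exact 𝓗.mem_free_iff.2 hy.1

lemma mem_chambers_iff {C : Set (Fin d → ℝ)} :
    C ∈ 𝓗.chambers ↔ ∃ u, (𝓗.Cell u).Nonempty ∧ C = 𝓗.Cell u := by
  constructor
  · rintro ⟨x, hx, rfl⟩
    refine ⟨𝓗.Ps x, ⟨x, ?_⟩, 𝓗.comp_eq hx⟩
    rw [mem_Cell_iff]; exact ⟨𝓗.mem_free_iff.1 hx, rfl⟩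
  · rintro ⟨u, ⟨x, hx⟩, rfl⟩
    have h := 𝓗.mem_Cell_iff.1 hx
    have hf := 𝓗.mem_free_iff.2 h.1
    exact ⟨x, hf, by rw [𝓗.comp_eq hf, h.2]⟩

lemma Cell_inj {u v : Finset (Fin n)} (hu : (𝓗.Cell u).Nonempty) (h : 𝓗.Cell u = 𝓗.Cell v) :
    u = v := by
  obtain ⟨x, hx⟩ := hu
  exact 𝓗.Cell_eq hx (h ▸ hx)

variable {𝓗}

lemma exists_dir_s5 {s : Finset (Fin n)}
    (h : LinearIndependent ℝ (fun i : s => 𝓗.normal i.1)) (c : Fin n → ℝ) :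
    ∃ w : Fin d → ℝ, ∀ i ∈ s, ∑ j, 𝓗.normal i j * w j = c i := by
  obtain ⟨φ, hφ⟩ : ∃ φ : (Fin d → ℝ) →ₗ[ℝ] ℝ, ∀ i : s, φ (𝓗.normal i.1) = c i := by
    let b := Module.Basis.span h
    obtain ⟨φ, hφ⟩ := LinearMap.exists_extend (b.constr ℝ (fun i : s => c i))
    refine ⟨φ, fun i => ?_⟩
    have h1 : (b i : Fin d → ℝ) = 𝓗.normal i.1 := congrArg Subtype.val (Module.Basis.span_apply h i)
    rw [← h1]
    have h2 := LinearMap.congr_fun hφ (b i)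
    rw [Module.Basis.constr_basis] at h2
    exact h2
  refine ⟨fun j => φ (Pi.single j 1), fun i hi => ?_⟩
  rw [← hφ ⟨i, hi⟩]
  conv_rhs => rw [pi_eq_sum_univ' (𝓗.normal i)]
  rw [map_sum]
  apply Finset.sum_congr rfl
  intro j _
  rw [map_smul, smul_eq_mul]

lemma Zs_indep (hgp : 𝓗.GeneralPosition) (x : Fin d → ℝ) :
    LinearIndependent ℝ (fun i : 𝓗.Zs x => 𝓗.normal i.1) := by
  apply hgp.1
  by_contra hc
  obtain ⟨B, hB, hBc⟩ := Finset.exists_subset_card_eq (show d + 1 ≤ (𝓗.Zs x).card by omega)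
  have h1 := hgp.2 B hBc
  have h2 : x ∈ ⋂ i ∈ B, 𝓗.H i := by
    simp only [Set.mem_iInter]
    intro i hi
    rw [mem_H_iff, ← mem_Zs]; exact hB hi
  rw [h1] at h2; exact h2

lemma mem_closure_Cell (hgp : 𝓗.GeneralPosition) (x : Fin d → ℝ) {t : Finset (Fin n)}
    (ht : t ⊆ 𝓗.Zs x) : x ∈ closure (𝓗.Cell (𝓗.Ps x ∪ t)) := by
  obtain ⟨w, hw⟩ := exists_dir_s5 (Zs_indep hgp x) (fun i => if i ∈ t then 1 else -1)
  have htend : Filter.Tendsto (fun ε : ℝ => x + ε • w) (𝓝[>] 0) (𝓝 x) := by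
    have : Continuous (fun ε : ℝ => x + ε • w) := by fun_prop
    have h := this.tendsto 0
    simp only [zero_smul, add_zero] at h
    exact h.mono_left nhdsWithin_le_nhds
  apply mem_closure_of_tendsto htend
  filter_upwards [htend.eventually (𝓗.ev_signs x), self_mem_nhdsWithin] with ε hε hpos i
  have hpos : 0 < ε := hpos
  by_cases hz : 𝓗.val i x = 0
  · rw [𝓗.val_ray, hz, hw i (𝓗.mem_Zs.2 hz)]
    have : i ∉ 𝓗.Ps x := by rw [mem_Ps, hz]; simp
    by_cases hit : i ∈ t <;> simp [hit, this, hpos]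
  · have hit : i ∉ t := fun h => hz (𝓗.mem_Zs.1 (ht h))
    rw [Finset.mem_union, mem_Ps]
    refine ⟨fun h => (hε i).1 (by tauto), fun h => (hε i).2 ?_⟩
    push Not at h
    exact lt_of_le_of_ne h.1 hz

variable (𝓗)

def fam (S : Set (Set (Fin d → ℝ))) : Finset (Finset (Fin n)) := by
  classical exact Finset.univ.filter (fun u => 𝓗.Cell u ∈ S)

lemma mem_fam {S : Set (Set (Fin d → ℝ))} {u : Finset (Fin n)} :
    u ∈ 𝓗.fam S ↔ 𝓗.Cell u ∈ S := by simp [fam]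

variable {𝓗} {S : Set (Set (Fin d → ℝ))}

lemma nonempty_of_mem_chambers {u : Finset (Fin n)} (h : 𝓗.Cell u ∈ 𝓗.chambers) :
    (𝓗.Cell u).Nonempty := by
  obtain ⟨v, hv, he⟩ := 𝓗.mem_chambers_iff.1 h
  rw [he]; exact hv

lemma mem_thickening (hgp : 𝓗.GeneralPosition) (hS : S ⊆ 𝓗.chambers) {x : Fin d → ℝ} :
    x ∈ thickening S ↔ ∀ t, t ⊆ 𝓗.Zs x → 𝓗.Ps x ∪ t ∈ 𝓗.fam S := by
  constructor
  · intro hx t ht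
    have h1 := mem_closure_Cell hgp x ht
    obtain ⟨y, hy1, hy2⟩ := mem_closure_iff.1 h1 _ isOpen_interior hx
    have hy3 := interior_subset hy1
    obtain ⟨z, hz1, hz2⟩ := mem_closure_iff.1 hy3 _ (𝓗.isOpen_Cell _) hy2
    simp only [Set.mem_iUnion] at hz2
    obtain ⟨C, hC, hz⟩ := hz2
    obtain ⟨v, -, rfl⟩ := 𝓗.mem_chambers_iff.1 (hS hC)
    rw [mem_fam, 𝓗.Cell_eq hz1 hz]; exact hC
  · intro h
    rw [thickening, mem_interior_iff_mem_nhds]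
    filter_upwards [𝓗.ev_sets x] with y hy
    obtain ⟨-, t, ht, hy⟩ := hy
    have h1 := mem_closure_Cell hgp y (Finset.empty_subset _)
    rw [Finset.union_empty, hy] at h1
    have h2 := 𝓗.mem_fam.1 (h t (ht.trans Finset.sdiff_subset))
    refine closure_mono ?_ h1
    intro z hz
    simp only [Set.mem_iUnion]
    exact ⟨_, h2, hz⟩

lemma exists_point {u A : Finset (Fin n)} (hu : Disjoint u A)
    (h : ∀ t, t ⊆ A → (𝓗.Cell (u ∪ t)).Nonempty) : ∃ x, 𝓗.Zs x = A ∧ 𝓗.Ps x = u := by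
  have key : ∀ B : Finset (Fin n), B ⊆ A → ∀ t, t ⊆ A \ B → ∃ x, 𝓗.Zs x = B ∧ 𝓗.Ps x = u ∪ t := by
    intro B
    induction B using Finset.induction_on with
    | empty =>
      intro _ t ht
      obtain ⟨x, hx⟩ := h t (ht.trans Finset.sdiff_subset)
      exact ⟨x, 𝓗.mem_Cell_iff.1 hx⟩
    | insert b B hb ih =>
      intro hBA t ht
      have hbA : b ∈ A := hBA (Finset.mem_insert_self _ _)
      have hBA' : B ⊆ A := (Finset.subset_insert _ _).trans hBA
      have ht' : t ⊆ A \ B := by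
        intro i hi; have := ht hi; simp at this ⊢; tauto
      have hbt : b ∉ t := by
        intro hi; have := ht hi; simp at this
      have hbu : b ∉ u := fun h => Finset.disjoint_left.1 hu h hbA
      obtain ⟨x, hx1, hx2⟩ := ih hBA' t ht'
      obtain ⟨y, hy1, hy2⟩ := ih hBA' (insert b t) (by
        rw [Finset.insert_subset_iff]; exact ⟨by simp [hbA, hb], ht'⟩)
      have hxb : 𝓗.val b x < 0 := by
        have h1 : b ∉ 𝓗.Zs x := by rw [hx1]; exact hb
        have h2 : b ∉ 𝓗.Ps x := by rw [hx2]; simp [hbu, hbt]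
        rw [mem_Zs] at h1; rw [mem_Ps] at h2
        exact lt_of_le_of_ne (not_lt.1 h2) h1
      have hyb : 0 < 𝓗.val b y := by
        rw [← mem_Ps, hy2]; simp
      set p := 𝓗.val b y
      set q := - 𝓗.val b x with hq
      have hqp : 0 < q := by linarith
      have hs : 0 < p + q := by linarith
      have hsum : p / (p + q) + q / (p + q) = 1 := by field_simp
      have ha : 0 < p / (p + q) := by positivity
      have hc : 0 < q / (p + q) := by positivity
      refine ⟨(p / (p + q)) • x + (q / (p + q)) • y, ?_⟩
      have hv := fun i => 𝓗.val_combo i x y _ _ hsum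
      have hvb : 𝓗.val b ((p / (p + q)) • x + (q / (p + q)) • y) = 0 := by
        rw [hv]
        have : 𝓗.val b x = -q := by rw [hq]; ring
        rw [this]; change p / (p + q) * -q + q / (p + q) * p = 0; ring
      have htri : ∀ i, i ≠ b → (𝓗.val i x = 0 ∧ 𝓗.val i y = 0 ∧ i ∈ B ∧ i ∉ u ∪ t) ∨
          (0 < 𝓗.val i x ∧ 0 < 𝓗.val i y ∧ i ∉ B ∧ i ∈ u ∪ t) ∨
          (𝓗.val i x < 0 ∧ 𝓗.val i y < 0 ∧ i ∉ B ∧ i ∉ u ∪ t) := by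
        intro i hi
        have e1 : 𝓗.val i x = 0 ↔ i ∈ B := by rw [← mem_Zs, hx1]
        have e2 : 𝓗.val i y = 0 ↔ i ∈ B := by rw [← mem_Zs, hy1]
        have e3 : 0 < 𝓗.val i x ↔ i ∈ u ∪ t := by rw [← mem_Ps, hx2]
        have e4 : 0 < 𝓗.val i y ↔ i ∈ u ∪ t := by
          rw [← mem_Ps, hy2, Finset.union_insert, Finset.mem_insert]; tauto
        rcases lt_trichotomy (𝓗.val i x) 0 with h1 | h1 | h1
        · have n1 : i ∉ B := fun h => h1.ne (e1.2 h)
          have n2 : i ∉ u ∪ t := fun h => h1.not_gt (e3.2 h)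
          refine Or.inr (Or.inr ⟨h1, ?_, n1, n2⟩)
          exact lt_of_le_of_ne (not_lt.1 fun h => n2 (e4.1 h)) (fun h => n1 (e2.1 h))
        · have n1 := e1.1 h1
          exact Or.inl ⟨h1, e2.2 n1, n1, fun h => by have := e3.2 h; linarith⟩
        · have n2 := e3.1 h1
          exact Or.inr (Or.inl ⟨h1, e4.2 n2, fun h => h1.ne' (e1.2 h), n2⟩)
      constructor
      · ext i
        rw [mem_Zs, Finset.mem_insert]
        by_cases hi : i = b
        · subst hi; simp [hvb]
        · rw [hv]
          rcases htri i hi with ⟨h1, h2, h3, h4⟩ | ⟨h1, h2, h3, h4⟩ | ⟨h1, h2, h3, h4⟩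
          · simp [h1, h2, h3]
          · have h5 := mul_pos ha h1
            have h6 := mul_pos hc h2
            simp only [hi, h3, or_self, iff_false]; linarith
          · have h5 := mul_neg_of_pos_of_neg ha h1
            have h6 := mul_neg_of_pos_of_neg hc h2
            simp only [hi, h3, or_self, iff_false]; linarith
      · ext i
        rw [mem_Ps]
        by_cases hi : i = b
        · subst hi; simp [hvb, hbu, hbt]
        · rw [hv]
          rcases htri i hi with ⟨h1, h2, h3, h4⟩ | ⟨h1, h2, h3, h4⟩ | ⟨h1, h2, h3, h4⟩
          · simp only [h1, h2, h4]; simp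
          · have h5 := mul_pos ha h1
            have h6 := mul_pos hc h2
            simp only [h4, iff_true]; linarith
          · have h5 := mul_neg_of_pos_of_neg ha h1
            have h6 := mul_neg_of_pos_of_neg hc h2
            simp only [h4, iff_false]; linarith
  obtain ⟨x, hx⟩ := key A subset_rfl ∅ (by simp)
  exact ⟨x, by simpa using hx⟩

lemma mem_stratum {A : Finset (Fin n)} {x : Fin d → ℝ} :
    x ∈ 𝓗.stratum S A ↔ x ∈ thickening S ∧ A ⊆ 𝓗.Zs x := by
  simp only [stratum, Set.mem_inter_iff, Set.mem_iInter, mem_H_iff, Finset.subset_iff, mem_Zs]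

lemma exists_point_stratum (hgp : 𝓗.GeneralPosition) (hS : S ⊆ 𝓗.chambers)
    {u A : Finset (Fin n)} (hu : u ∈ fib (𝓗.fam S) A) :
    ∃ x ∈ 𝓗.stratum S A, 𝓗.Zs x = A ∧ 𝓗.Ps x = u := by
  rw [mem_fib] at hu
  obtain ⟨x, hx1, hx2⟩ := exists_point hu.1 (fun t ht =>
    nonempty_of_mem_chambers (hS (𝓗.mem_fam.1 (hu.2 t ht))))
  refine ⟨x, ?_, hx1, hx2⟩
  rw [mem_stratum, mem_thickening hgp hS, hx1, hx2]
  exact ⟨hu.2, subset_rfl⟩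

lemma disj_Ps_Zs (x : Fin d → ℝ) : Disjoint (𝓗.Ps x) (𝓗.Zs x) := by
  rw [Finset.disjoint_left]; intro i h1 h2
  rw [mem_Ps] at h1; rw [mem_Zs] at h2; linarith

lemma Ps_mem_fib (hgp : 𝓗.GeneralPosition) (hS : S ⊆ 𝓗.chambers) {A : Finset (Fin n)}
    {x : Fin d → ℝ} (hx : x ∈ 𝓗.stratum S A) {t : Finset (Fin n)} (ht : t ⊆ 𝓗.Zs x \ A) :
    𝓗.Ps x ∪ t ∈ fib (𝓗.fam S) A := by
  rw [mem_stratum, mem_thickening hgp hS] at hx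
  rw [mem_fib]
  refine ⟨?_, fun s hs => ?_⟩
  · rw [Finset.disjoint_union_left]
    exact ⟨(disj_Ps_Zs x).mono_right hx.2, Finset.disjoint_left.2 fun i hi =>
      (Finset.mem_sdiff.1 (ht hi)).2⟩
  · rw [Finset.union_assoc]
    exact hx.1 _ (Finset.union_subset (ht.trans Finset.sdiff_subset) (hs.trans hx.2))

lemma allConn_fam (hgp : 𝓗.GeneralPosition) (hS : S ⊆ 𝓗.chambers)
    (hsc : 𝓗.StrataConnected S) : AllConn (𝓗.fam S) := by
  intro A P hP hne hcl
  obtain ⟨u, hu⟩ := hne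
  obtain ⟨x, hx, hxA, hxu⟩ := exists_point_stratum hgp hS (hP hu)
  refine Finset.Subset.antisymm hP fun v hv => ?_
  obtain ⟨y, hy, hyA, hyv⟩ := exists_point_stratum hgp hS hv
  have hstep : ∀ p q, p ∈ fib (𝓗.fam S) A → q ∈ fib (𝓗.fam S) A → ∀ e, q = symmDiff p {e} →
      (p ∈ P ↔ q ∈ P) := by
    intro p q hp hq e he
    constructor
    · intro h; rw [he]; exact hcl p h e (he ▸ hq)
    · intro h
      have hpq : p = symmDiff q {e} := by rw [he, symmDiff_symmDiff_cancel_right]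
      rw [hpq]; exact hcl q h e (hpq ▸ hp)
  have := (hsc A ⟨x, hx⟩).isPreconnected.induction₂ (fun a b => 𝓗.Ps a ∈ P ↔ 𝓗.Ps b ∈ P) (by
      intro a ha
      filter_upwards [nhdsWithin_le_nhds (𝓗.ev_sets a), self_mem_nhdsWithin] with b hb hbs
      obtain ⟨-, t, ht, hb⟩ := hb
      rw [hb]
      have htA : t ⊆ 𝓗.Zs a \ A := by
        intro i hi
        have := Finset.mem_sdiff.1 (ht hi)
        exact Finset.mem_sdiff.2 ⟨this.1, fun h => this.2 ((mem_stratum.1 hbs).2 h)⟩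
      clear ht hb
      induction t using Finset.induction_on with
      | empty => simp
      | insert e t he ih =>
        have h1 : t ⊆ 𝓗.Zs a \ A := (Finset.subset_insert _ _).trans htA
        refine Iff.trans (ih h1) ?_
        apply hstep _ _ (Ps_mem_fib hgp hS ha h1) (Ps_mem_fib hgp hS ha htA) e
        rw [symmDiff_single_notMem, Finset.union_insert]
        rw [Finset.mem_union]
        have h2 := (Finset.mem_sdiff.1 (htA (Finset.mem_insert_self e t))).1
        have h3 := Finset.disjoint_right.1 (disj_Ps_Zs a) h2
        tauto)
    (by intro a b c _ _ _ h1 h2; exact h1.trans h2) (by intro a b _ _ h; exact h.symm) hx hy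
  rw [hxu, hyv] at this
  exact this.1 hu

lemma bounds_not_stF (hgp : 𝓗.GeneralPosition) (hS : S ⊆ 𝓗.chambers) {f : Fin n}
    {A : Finset (Fin n)} (h : ∀ x ∈ 𝓗.stratum S A, 𝓗.val f x ≠ 0) :
    A ∉ stF (fib (𝓗.fam S) {f}) := by
  intro hA
  simp only [stF, Finset.mem_filter, Finset.mem_univ, true_and] at hA
  obtain ⟨u, hu⟩ := hA
  rw [mem_fib] at hu
  have hfu : f ∉ u := by
    have := (mem_fib.1 (hu.2 ∅ (by simp))).1
    simpa using this
  have hfA : f ∉ A := by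
    intro hf
    have := (mem_fib.1 (hu.2 A subset_rfl)).1
    simp [hf] at this
  have : u ∈ fib (𝓗.fam S) (insert f A) := by
    rw [mem_fib]
    refine ⟨Finset.disjoint_insert_right.2 ⟨hfu, hu.1⟩, fun t ht => ?_⟩
    have h1 := (mem_fib.1 (hu.2 (t ∩ A) Finset.inter_subset_right)).2 (t ∩ {f})
      Finset.inter_subset_right
    convert h1 using 1
    ext i
    have := @ht i
    simp only [Finset.mem_union, Finset.mem_inter, Finset.mem_singleton, Finset.mem_insert] at this ⊢
    tauto
  obtain ⟨x, hx, hxA, -⟩ := exists_point_stratum hgp hS this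
  rw [mem_stratum] at hx
  refine h x (mem_stratum.2 ⟨hx.1, (Finset.subset_insert _ _).trans hx.2⟩) ?_
  rw [← mem_Zs]; exact hx.2 (Finset.mem_insert_self _ _)

lemma bounds_points (hgp : 𝓗.GeneralPosition) (hS : S ⊆ 𝓗.chambers) {f : Fin n}
    {A : Finset (Fin n)} 
    (hne : (𝓗.H f ∩ closure (𝓗.stratum S A) ∩ ⋂ i ∈ A, 𝓗.H i).Nonempty) :
    ∃ y ∈ 𝓗.stratum S A, (∀ t, t ⊆ A → 𝓗.Ps y ∪ t ∈ 𝓗.fam S) ∧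
      (∀ t, t ⊆ A → (𝓗.Cell ((𝓗.Ps y ∪ t).erase f)).Nonempty ∧
        (𝓗.Cell (insert f (𝓗.Ps y ∪ t))).Nonempty) := by
  obtain ⟨x, ⟨hxf, hxc⟩, hxA⟩ := hne
  obtain ⟨y, hy1, hy2⟩ := mem_closure_iff_nhds.1 hxc _ (𝓗.ev_sets x)
  obtain ⟨hZ, s, hs, hP⟩ := hy1
  have hys := mem_stratum.1 hy2
  have hA : A ⊆ 𝓗.Zs x := hys.2.trans hZ
  have hf : f ∈ 𝓗.Zs x := 𝓗.mem_Zs.2 (𝓗.mem_H_iff.1 hxf)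
  have hfP : f ∉ 𝓗.Ps x := Finset.disjoint_right.1 (disj_Ps_Zs x) hf
  have hs' : s ⊆ 𝓗.Zs x := hs.trans Finset.sdiff_subset
  refine ⟨y, hy2, fun t ht => (mem_thickening hgp hS).1 hys.1 t (ht.trans hys.2), fun t ht => ⟨?_, ?_⟩⟩
  · have := mem_closure_Cell hgp x (t := (s ∪ t).erase f)
      ((Finset.erase_subset _ _).trans (Finset.union_subset hs' (ht.trans hA)))
    convert closure_nonempty_iff.1 ⟨x, this⟩ using 2
    rw [hP]; ext i; simp only [Finset.mem_union, Finset.mem_erase]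
    by_cases hi : i = f
    · subst hi; tauto
    · tauto
  · have := mem_closure_Cell hgp x (t := insert f (s ∪ t))
      (Finset.insert_subset hf (Finset.union_subset hs' (ht.trans hA)))
    convert closure_nonempty_iff.1 ⟨x, this⟩ using 2
    rw [hP]; ext i; simp only [Finset.mem_union, Finset.mem_insert]
    tauto

lemma edge_mem (hS : S ⊆ 𝓗.chambers) {f : Fin n} {u : Finset (Fin n)} (hu : u ∈ 𝓗.fam S)
    (hv : (𝓗.Cell (symmDiff u {f})).Nonempty) (hvS : symmDiff u {f} ∉ 𝓗.fam S) :
    (𝓗.Cell u, 𝓗.Cell (symmDiff u {f})) ∈ 𝓗.edgeBoundary S := by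
  rw [mem_fam] at hu hvS
  refine ⟨hu, hvS, hS hu, 𝓗.mem_chambers_iff.2 ⟨_, hv, rfl⟩, f, ?_, ?_⟩
  · by_cases hf : f ∈ u
    · left
      refine ⟨fun x hx => 𝓗.mem_pos_iff.2 ((hx f).1 hf), fun x hx => 𝓗.mem_neg_iff.2 ((hx f).2 ?_)⟩
      rw [mem_symmDiff_single]; tauto
    · right
      refine ⟨fun x hx => 𝓗.mem_neg_iff.2 ((hx f).2 hf), fun x hx => 𝓗.mem_pos_iff.2 ((hx f).1 ?_)⟩
      rw [mem_symmDiff_single]; tauto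
  · intro e he
    by_contra hef
    obtain ⟨x, hx⟩ := nonempty_of_mem_chambers (hS hu)
    obtain ⟨y, hy⟩ := hv
    have hxe := hx e
    have hye := hy e
    have hiff : e ∈ symmDiff u {f} ↔ e ∈ u := by rw [mem_symmDiff_single]; tauto
    rw [hiff] at hye
    rcases he with ⟨h1, h2⟩ | ⟨h1, h2⟩
    · have h1 := 𝓗.mem_pos_iff.1 (h1 hx)
      have h2 := 𝓗.mem_neg_iff.1 (h2 hy)
      by_cases heu : e ∈ u
      · linarith [hye.1 heu]
      · linarith [hxe.2 heu]
    · have h1 := 𝓗.mem_neg_iff.1 (h1 hx)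
      have h2 := 𝓗.mem_pos_iff.1 (h2 hy)
      by_cases heu : e ∈ u
      · linarith [hxe.1 heu]
      · linarith [hye.2 heu]

lemma per_f (hgp : 𝓗.GeneralPosition) (hS : S ⊆ 𝓗.chambers)
    (hsc : 𝓗.StrataConnected S) (f : Fin n) (B : Finset (Finset (Fin n)))
    (hB : ∀ A ∈ B, 𝓗.Bounds f S A) :
    B.card ≤ ((𝓗.fam S).filter (fun u => symmDiff u {f} ∈ 𝓗.fam 𝓗.chambers ∧
      symmDiff u {f} ∉ 𝓗.fam S)).card := by
  classical
  have hC : ∀ u, u ∈ 𝓗.fam 𝓗.chambers ↔ (𝓗.Cell u).Nonempty := fun u =>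
    ⟨fun h => nonempty_of_mem_chambers (𝓗.mem_fam.1 h), fun h => 𝓗.mem_fam.2
      (𝓗.mem_chambers_iff.2 ⟨u, h, rfl⟩)⟩
  have hBe : B = B.filter (fun A => 𝓗.stratum S A ⊆ 𝓗.pos f) ∪
      B.filter (fun A => 𝓗.stratum S A ⊆ 𝓗.neg f) := by
    ext A
    simp only [Finset.mem_union, Finset.mem_filter]
    have := fun h => (hB A h).1
    tauto
  rw [hBe]
  apply comb_main (allConn_fam hgp hS hsc)
  · intro u hu; rw [hC]; exact nonempty_of_mem_chambers (hS (𝓗.mem_fam.1 hu))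
  · intro A hA
    rw [Finset.mem_filter] at hA
    have hpos : ∀ x ∈ 𝓗.stratum S A, 0 < 𝓗.val f x := fun x hx => 𝓗.mem_pos_iff.1 (hA.2 hx)
    refine ⟨bounds_not_stF hgp hS fun x hx => (hpos x hx).ne', ?_⟩
    obtain ⟨y, hy, hy1, hy2⟩ := bounds_points hgp hS (hB A hA.1).2
    have hyA := (mem_stratum.1 hy).2
    have hfy : f ∈ 𝓗.Ps y := 𝓗.mem_Ps.2 (hpos y hy)
    have hfA : f ∉ A := fun h => Finset.disjoint_left.1 (disj_Ps_Zs y) hfy (hyA h)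
    refine ⟨(𝓗.Ps y).erase f, ((disj_Ps_Zs y).mono_right hyA).mono_left (Finset.erase_subset _ _),
      fun t ht => ?_⟩
    have hft : f ∉ t := fun h => hfA (ht h)
    have e1 : (𝓗.Ps y).erase f ∪ t = (𝓗.Ps y ∪ t).erase f := by
      rw [Finset.erase_union_distrib, Finset.erase_eq_of_notMem hft]
    rw [e1, Finset.insert_erase (Finset.mem_union_left _ hfy)]
    exact ⟨by simp, hy1 t ht, (hC _).2 (hy2 t ht).1⟩
  · intro A hA
    rw [Finset.mem_filter] at hA
    have hneg : ∀ x ∈ 𝓗.stratum S A, 𝓗.val f x < 0 := fun x hx => 𝓗.mem_neg_iff.1 (hA.2 hx)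
    refine ⟨bounds_not_stF hgp hS fun x hx => (hneg x hx).ne, ?_⟩
    obtain ⟨y, hy, hy1, hy2⟩ := bounds_points hgp hS (hB A hA.1).2
    have hyA := (mem_stratum.1 hy).2
    have hfy : f ∉ 𝓗.Ps y := fun h => by
      have h1 := 𝓗.mem_Ps.1 h
      linarith [hneg y hy]
    have hfA : f ∉ A := fun h => by
      have h1 := 𝓗.mem_Zs.1 (hyA h)
      linarith [hneg y hy]
    refine ⟨𝓗.Ps y, (disj_Ps_Zs y).mono_right hyA, fun t ht => ?_⟩
    have hft : f ∉ t := fun h => hfA (ht h)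
    exact ⟨by simp [hfy, hft], hy1 t ht, (hC _).2 (hy2 t ht).2⟩

end Arrangement

/-- If `S` is a strata-connected subset of the chambers of an
arrangement in general position in `ℝ^d`, then `|∂S| ≥ ∑_{A ∈ supp S} |b(A)|`
(the summand vanishes for `A ∉ supp S`, since then the stratum is empty). -/
theorem stmt5 {d n : ℕ} (𝓗 : Arrangement d n) (hgp : 𝓗.GeneralPosition)
    (S : Set (Set (Fin d → ℝ))) (hS : S ⊆ 𝓗.chambers)
    (hsc : 𝓗.StrataConnected S) :
    ∑ A : Finset (Fin n), {f : Fin n | 𝓗.Bounds f S A}.ncard ≤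
      (𝓗.edgeBoundary S).ncard := by
  classical
  let D : Fin n → Finset (Finset (Fin n)) := fun f =>
    (𝓗.fam S).filter (fun u => symmDiff u {f} ∈ 𝓗.fam 𝓗.chambers ∧ symmDiff u {f} ∉ 𝓗.fam S)
  have h1 : ∑ A : Finset (Fin n), {f : Fin n | 𝓗.Bounds f S A}.ncard =
      ∑ f : Fin n, (Finset.univ.filter (fun A => 𝓗.Bounds f S A)).card := by
    have : ∀ A : Finset (Fin n), {f : Fin n | 𝓗.Bounds f S A}.ncard =
        (Finset.univ.filter (fun f => 𝓗.Bounds f S A)).card := by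
      intro A
      rw [← Set.ncard_coe_finset]; congr 1; ext f; simp
    simp only [this, Finset.card_filter]
    exact Finset.sum_comm
  rw [h1]
  calc ∑ f : Fin n, (Finset.univ.filter (fun A => 𝓗.Bounds f S A)).card
      ≤ ∑ f : Fin n, (D f).card := Finset.sum_le_sum fun f _ =>
        Arrangement.per_f hgp hS hsc f _ (by simp)
    _ = (Finset.univ.sigma D).card := (Finset.card_sigma _ _).symm
    _ = ((Finset.univ.sigma D : Finset (Σ _ : Fin n, Finset (Fin n))) :
          Set (Σ _ : Fin n, Finset (Fin n))).ncard := (Set.ncard_coe_finset _).symm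
    _ ≤ (𝓗.edgeBoundary S).ncard := by
        have hE : (𝓗.edgeBoundary S).Finite := by
          have hfin : 𝓗.chambers.Finite := by
            apply (Set.finite_range 𝓗.Cell).subset
            intro C hC
            obtain ⟨u, -, rfl⟩ := 𝓗.mem_chambers_iff.1 hC
            exact ⟨u, rfl⟩
          apply (hfin.prod hfin).subset
          rintro ⟨C, C'⟩ h
          exact ⟨h.2.2.1, h.2.2.2.1⟩
        apply Set.ncard_le_ncard_of_injOn
          (fun p => (𝓗.Cell p.2, 𝓗.Cell (symmDiff p.2 {p.1}))) (ht := hE)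
        · rintro ⟨f, u⟩ hp
          simp only [Finset.coe_sigma, Set.mem_sigma_iff, Finset.mem_coe, D, Finset.mem_filter] at hp
          exact Arrangement.edge_mem hS hp.2.1
            (Arrangement.nonempty_of_mem_chambers (𝓗.mem_fam.1 hp.2.2.1)) hp.2.2.2
        · rintro ⟨f, u⟩ hp ⟨g, v⟩ hq heq
          simp only [Finset.coe_sigma, Set.mem_sigma_iff, Finset.mem_coe, D, Finset.mem_filter]
            at hp hq
          simp only [Prod.mk.injEq] at heq
          have huv := 𝓗.Cell_inj
            (Arrangement.nonempty_of_mem_chambers (hS (𝓗.mem_fam.1 hp.2.1))) heq.1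
          subst huv
          have h2 := 𝓗.Cell_inj
            (Arrangement.nonempty_of_mem_chambers (𝓗.mem_fam.1 hp.2.2.1)) heq.2
          have h3 := symmDiff_right_injective u h2
          have h4 : f = g := by simpa using h3
          subst h4; rfl
end
end
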